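/- arXiv:1509.01691 — 6 statements merged into one kernel-verified Lean document; each statement's English description precedes it below -/
import Mathlib

section
/- Let (X,d) be a complete metric space and let σ be a conical geodesic bicombing on X that has the midpoint property. Let Σ be a subsemigroup of the isometry group of X such that every element of Σ is σ-equivariant. If there is a non-empty compact subset K ⊆ X with s(K) = K for every s ∈ Σ, then there exists a point x⋆ in cl conv_σ(K) such that s(x⋆) = x⋆ for every s ∈ Σ. -/
open Set

/-- A conical geodesic bicombing on a metric space. -/
def IsConicalBicombing {X : Type*} [MetricSpace X] (σ : X → X → ℝ → X) : Prop :=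
  (∀ x y : X, σ x y 0 = x) ∧ (∀ x y : X, σ x y 1 = y) ∧
  (∀ x y : X, ∀ s ∈ Icc (0:ℝ) 1, ∀ t ∈ Icc (0:ℝ) 1,
    dist (σ x y s) (σ x y t) = |s - t| * dist x y) ∧
  (∀ x x' y y' : X, ∀ t ∈ Icc (0:ℝ) 1,
    dist (σ x y t) (σ x' y' t) ≤ (1 - t) * dist x x' + t * dist y y')

/-- The midpoint property of a bicombing. -/
def MidpointProp {X : Type*} [MetricSpace X] (σ : X → X → ℝ → X) : Prop :=
  ∀ x y : X, σ x y (1/2) = σ y x (1/2)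

/-- A self-map is `σ`-equivariant. -/
def SigmaEquivariant {X : Type*} [MetricSpace X] (σ : X → X → ℝ → X) (φ : X → X) : Prop :=
  ∀ x y : X, ∀ t ∈ Icc (0:ℝ) 1, φ (σ x y t) = σ (φ x) (φ y) t

/-- The sets `A_k` in the inductive construction of the `σ`-convex hull. -/
def convSigmaSets {X : Type*} [MetricSpace X] (σ : X → X → ℝ → X) (A : Set X) : ℕ → Set X
  | 0 => A
  | k + 1 => {z | ∃ x ∈ convSigmaSets σ A k, ∃ y ∈ convSigmaSets σ A k,
      ∃ t ∈ Icc (0:ℝ) 1, z = σ x y t}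

/-- The `σ`-convex hull of a set. -/
def convSigma {X : Type*} [MetricSpace X] (σ : X → X → ℝ → X) (A : Set X) : Set X :=
  ⋃ k : ℕ, convSigmaSets σ A k

/-!
Evaluating the bicombing at `1/2` gives a symmetric conical midpoint operation. On a complete space
it extends to permutation-invariant barycenters of `n` points which are `1/n`-Lipschitz for the `ℓ¹`
distance: to pass from `n` to `n + 1` points, repeatedly replace each point by the barycenter of the
others; for `n ≥ 2` the tuple contracts to a single point.

Let `n` be the largest cardinality of an `ε`-separated family in the compact set `K`. By Hall's
marriage theorem, any two `ε`-separated `n`-tuples of `K` are `ε`-close after a permutation, so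
their barycenters are `ε`-close. The barycenters of all such tuples thus form a compact set of
diameter at most `ε`, invariant under every equivariant isometry which maps `K` to itself. Iterating
with `ε = 2⁻ᵏ` produces a sequence converging to a common fixed point.
-/

open Filter Function Metric TopologicalSpace Topology

section MidpointOperations

variable {X : Type*} [MetricSpace X] {m : X → X → X}

/-- A symmetric midpoint operation satisfying the conical inequality at `t = 1/2`; no geodesics
joining the points are required. -/
structure IsConicalMidpoint (m : X → X → X) : Prop where
  self : ∀ x, m x x = x
  comm : ∀ x y, m x y = m y x
  dist_le : ∀ x y x' y', dist (m x y) (m x' y') ≤ (dist x x' + dist y y') / 2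

/-- Convexity with respect to a midpoint operation: the set is stable under taking midpoints. -/
def IsMidpointConvex {X : Type*} (m : X → X → X) (C : Set X) : Prop :=
  ∀ x ∈ C, ∀ y ∈ C, m x y ∈ C

namespace IsConicalMidpoint

theorem isMidpointConvex_closedBall (hm : IsConicalMidpoint m) (p : X) (r : ℝ) :
    IsMidpointConvex m (closedBall p r) := by
  intro x hx y hy
  rw [mem_closedBall] at hx hy ⊢
  calc dist (m x y) p = dist (m x y) (m p p) := by rw [hm.self]
    _ ≤ (dist x p + dist y p) / 2 := hm.dist_le x y p p
    _ ≤ r := by linarith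

theorem continuous_uncurry (hm : IsConicalMidpoint m) : Continuous (uncurry m) := by
  refine (LipschitzWith.of_dist_le_mul (K := 1) ?_).continuous
  rintro ⟨x, y⟩ ⟨x', y'⟩
  have hx : dist x x' ≤ dist (x, y) (x', y') := le_max_left _ _
  have hy : dist y y' ≤ dist (x, y) (x', y') := le_max_right _ _
  calc dist (m x y) (m x' y') ≤ (dist x x' + dist y y') / 2 := hm.dist_le x y x' y'
    _ ≤ (1 : NNReal) * dist (x, y) (x', y') := by rw [NNReal.coe_one]; linarith

theorem isMidpointConvex_closure (hm : IsConicalMidpoint m) {C : Set X}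
    (hC : IsMidpointConvex m C) : IsMidpointConvex m (closure C) :=
  fun _ hx _ hy ↦ map_mem_closure₂ hm.continuous_uncurry hx hy hC

end IsConicalMidpoint

end MidpointOperations

section Bicombings

variable {X : Type*} [MetricSpace X] {σ : X → X → ℝ → X}

theorem half_mem_Icc_zero_one : (1 / 2 : ℝ) ∈ Icc (0 : ℝ) 1 := by
  constructor <;> norm_num

theorem IsConicalBicombing.isConicalMidpoint (hσ : IsConicalBicombing σ) (hmid : MidpointProp σ) :
    IsConicalMidpoint fun x y ↦ σ x y (1 / 2) where
  self x := by
    have := hσ.2.2.1 x x (1 / 2) half_mem_Icc_zero_one 0 (left_mem_Icc.2 zero_le_one)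
    rwa [dist_self, mul_zero, dist_eq_zero, hσ.1] at this
  comm := hmid
  dist_le x y x' y' := by
    have := hσ.2.2.2 x x' y y' (1 / 2) half_mem_Icc_zero_one
    linarith

theorem subset_convSigma (σ : X → X → ℝ → X) (A : Set X) : A ⊆ convSigma σ A :=
  subset_iUnion (convSigmaSets σ A) 0

theorem IsConicalBicombing.monotone_convSigmaSets (hσ : IsConicalBicombing σ) (A : Set X) :
    Monotone (convSigmaSets σ A) :=
  monotone_nat_of_le_succ fun _ x hx ↦
    ⟨x, hx, x, hx, 0, left_mem_Icc.2 zero_le_one, (hσ.1 x x).symm⟩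

theorem IsConicalBicombing.isMidpointConvex_convSigma (hσ : IsConicalBicombing σ) (A : Set X) :
    IsMidpointConvex (fun x y ↦ σ x y (1 / 2)) (convSigma σ A) := by
  intro x hx y hy
  obtain ⟨i, hi⟩ := mem_iUnion.1 hx
  obtain ⟨j, hj⟩ := mem_iUnion.1 hy
  have mono := hσ.monotone_convSigmaSets A
  exact mem_iUnion.2 ⟨max i j + 1, x, mono (le_max_left i j) hi, y, mono (le_max_right i j) hj,
    1 / 2, half_mem_Icc_zero_one, rfl⟩

end Bicombings

section Barycenters

variable {X : Type*} [MetricSpace X] {m : X → X → X} {n : ℕ} {b : (Fin n → X) → X}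

/-- An `n`-point barycenter map for the midpoint operation `m`: symmetric, `1/n`-Lipschitz for the
`ℓ¹` distance on tuples, and compatible with continuous maps commuting with `m` and with closed
midpoint-convex sets. -/
structure IsBarycenter (m : X → X → X) (n : ℕ) (b : (Fin n → X) → X) : Prop where
  comp_perm : ∀ (x : Fin n → X) (p : Equiv.Perm (Fin n)), b (x ∘ p) = b x
  mul_dist_le : ∀ x y : Fin n → X, n * dist (b x) (b y) ≤ ∑ i, dist (x i) (y i)
  map : ∀ f : X → X, Continuous f → Semiconj₂ f m m → ∀ x : Fin n → X, f (b x) = b (f ∘ x)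
  mem : ∀ C : Set X, IsClosed C → IsMidpointConvex m C →
    ∀ x : Fin n → X, (∀ i, x i ∈ C) → b x ∈ C

theorem isBarycenter_one (m : X → X → X) : IsBarycenter m 1 (fun x ↦ x 0) where
  comp_perm x p := by rw [comp_apply, Subsingleton.elim (p 0) 0]
  mul_dist_le x y := by simp
  map _ _ _ _ := rfl
  mem _ _ _ _ hx := hx 0

theorem IsConicalMidpoint.isBarycenter_two (hm : IsConicalMidpoint m) :
    IsBarycenter m 2 (fun x ↦ m (x 0) (x 1)) where
  comp_perm x p := by
    have id_or_swap : (p 0 = 0 ∧ p 1 = 1) ∨ (p 0 = 1 ∧ p 1 = 0) := by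
      revert p
      decide
    rcases id_or_swap with ⟨h0, h1⟩ | ⟨h0, h1⟩
    · simp only [comp_apply, h0, h1]
    · simp only [comp_apply, h0, h1, hm.comm (x 1)]
  mul_dist_le x y := by
    have := hm.dist_le (x 0) (x 1) (y 0) (y 1)
    rw [Fin.sum_univ_two]
    push_cast
    linarith
  map _ _ hf _ := hf _ _
  mem _ _ hC _ hx := hC _ (hx 0) _ (hx 1)

namespace IsBarycenter

theorem dist_le_of_forall_dist_le (hb : IsBarycenter m n b) (hn : 0 < n) {x y : Fin n → X} {r : ℝ}
    (h : ∀ i, dist (x i) (y i) ≤ r) : dist (b x) (b y) ≤ r := by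
  refine le_of_mul_le_mul_left ?_ (Nat.cast_pos.2 hn : (0 : ℝ) < n)
  calc n * dist (b x) (b y) ≤ ∑ i, dist (x i) (y i) := hb.mul_dist_le x y
    _ ≤ Finset.univ.card • r := Finset.sum_le_card_nsmul _ _ _ fun i _ ↦ h i
    _ = n * r := by rw [Finset.card_fin, nsmul_eq_mul]

theorem continuous (hb : IsBarycenter m n b) (hn : 0 < n) : Continuous b := by
  refine (LipschitzWith.of_dist_le_mul (K := 1) fun x y ↦ ?_).continuous
  rw [NNReal.coe_one, one_mul]
  exact hb.dist_le_of_forall_dist_le hn (dist_le_pi_dist x y)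

end IsBarycenter

/-- Replace every point of an `(n + 1)`-tuple by the `b`-barycenter of the other `n` points. -/
def leaveOneOut {X : Type*} {n : ℕ} (b : (Fin n → X) → X) (x : Fin (n + 1) → X) :
    Fin (n + 1) → X :=
  fun i ↦ b (i.removeNth x)

theorem exists_perm_succAbove (p : Equiv.Perm (Fin (n + 1))) (i : Fin (n + 1)) :
    ∃ q : Equiv.Perm (Fin n), ∀ k, (p i).succAbove (q k) = p (i.succAbove k) := by
  have avoids (k : Fin n) : p (i.succAbove k) ≠ p i := p.injective.ne (Fin.succAbove_ne i k)
  choose q hq using fun k ↦ Fin.exists_succAbove_eq (avoids k)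
  have q_injective : Injective q := fun k l hkl ↦
    Fin.succAbove_right_injective (p.injective (by rw [← hq k, ← hq l, hkl]))
  exact ⟨Equiv.ofBijective q (Finite.injective_iff_bijective.1 q_injective), hq⟩

namespace IsBarycenter

theorem leaveOneOut_comp_perm (hb : IsBarycenter m n b) (x : Fin (n + 1) → X)
    (p : Equiv.Perm (Fin (n + 1))) : leaveOneOut b (x ∘ p) = leaveOneOut b x ∘ p := by
  funext i
  obtain ⟨q, hq⟩ := exists_perm_succAbove p i
  have removeNth_comp : i.removeNth (x ∘ p) = (p i).removeNth x ∘ q := by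
    funext k
    exact congrArg x (hq k).symm
  exact (congrArg b removeNth_comp).trans (hb.comp_perm _ q)

theorem mul_dist_leaveOneOut_le (hb : IsBarycenter m n b) (x : Fin (n + 1) → X)
    (i j : Fin (n + 1)) :
    n * dist (leaveOneOut b x i) (leaveOneOut b x j) ≤ dist (x i) (x j) := by
  rcases eq_or_ne j i with rfl | hji
  · simp
  obtain ⟨k, rfl⟩ := Fin.exists_succAbove_eq hji
  set j := i.succAbove k
  have eq_swap : leaveOneOut b x j = leaveOneOut b (x ∘ Equiv.swap i j) i := by
    rw [hb.leaveOneOut_comp_perm, comp_apply, Equiv.swap_apply_left]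
  have swap_fixes (l : Fin n) (hl : l ≠ k) : Equiv.swap i j (i.succAbove l) = i.succAbove l :=
    Equiv.swap_apply_of_ne_of_ne (Fin.succAbove_ne i l) (Fin.succAbove_right_injective.ne hl)
  calc n * dist (leaveOneOut b x i) (leaveOneOut b x j)
      ≤ ∑ l, dist (x (i.succAbove l)) (x (Equiv.swap i j (i.succAbove l))) := by
        rw [eq_swap]
        exact hb.mul_dist_le _ _
    _ = dist (x j) (x (Equiv.swap i j j)) :=
        Fintype.sum_eq_single k fun l hl ↦ by rw [swap_fixes l hl, dist_self]
    _ = dist (x i) (x j) := by rw [Equiv.swap_apply_right, dist_comm]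

theorem sum_dist_leaveOneOut_le (hb : IsBarycenter m n b) (hn : 0 < n) (x y : Fin (n + 1) → X) :
    ∑ i, dist (leaveOneOut b x i) (leaveOneOut b y i) ≤ ∑ i, dist (x i) (y i) := by
  have mul_dist_le (i : Fin (n + 1)) : n * dist (leaveOneOut b x i) (leaveOneOut b y i) ≤
      ∑ j, dist (x j) (y j) - dist (x i) (y i) := by
    rw [Fin.sum_univ_succAbove _ i, add_sub_cancel_left]
    exact hb.mul_dist_le _ _
  refine le_of_mul_le_mul_left ?_ (Nat.cast_pos.2 hn : (0 : ℝ) < n)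
  calc n * ∑ i, dist (leaveOneOut b x i) (leaveOneOut b y i)
      ≤ ∑ i, (∑ j, dist (x j) (y j) - dist (x i) (y i)) := by
        rw [Finset.mul_sum]
        exact Finset.sum_le_sum fun i _ ↦ mul_dist_le i
    _ = n * ∑ i, dist (x i) (y i) := by
        rw [Finset.sum_sub_distrib, Finset.sum_const, Finset.card_fin, nsmul_eq_mul]
        push_cast
        ring

theorem sum_dist_iterate_leaveOneOut_le (hb : IsBarycenter m n b) (hn : 0 < n) (k : ℕ)
    (x y : Fin (n + 1) → X) :
    ∑ i, dist ((leaveOneOut b)^[k] x i) ((leaveOneOut b)^[k] y i) ≤ ∑ i, dist (x i) (y i) := by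
  induction k with
  | zero => rfl
  | succ k ih =>
    simp only [iterate_succ_apply']
    exact (hb.sum_dist_leaveOneOut_le hn _ _).trans ih

theorem dist_iterate_leaveOneOut_le (hb : IsBarycenter m n b) (hn : 2 ≤ n) (x : Fin (n + 1) → X)
    (k : ℕ) (i j : Fin (n + 1)) :
    dist ((leaveOneOut b)^[k] x i) ((leaveOneOut b)^[k] x j) ≤ dist (x i) (x j) / 2 ^ k := by
  induction k with
  | zero => simp
  | succ k ih =>
    simp only [iterate_succ_apply']
    set y := (leaveOneOut b)^[k] x
    have two_mul_le : 2 * dist (leaveOneOut b y i) (leaveOneOut b y j) ≤ dist (y i) (y j) :=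
      le_trans (by gcongr; exact_mod_cast hn) (hb.mul_dist_leaveOneOut_le y i j)
    rw [pow_succ, ← div_div]
    linarith

theorem iterate_leaveOneOut_mem (hb : IsBarycenter m n b) {C : Set X} (hC : IsClosed C)
    (hCm : IsMidpointConvex m C) (k : ℕ) {x : Fin (n + 1) → X} (hx : ∀ i, x i ∈ C)
    (i : Fin (n + 1)) : (leaveOneOut b)^[k] x i ∈ C := by
  have mapsTo : MapsTo (leaveOneOut b) {x | ∀ i, x i ∈ C} {x | ∀ i, x i ∈ C} :=
    fun _ hy _ ↦ hb.mem C hC hCm _ fun _ ↦ hy _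
  exact mapsTo.iterate k hx i

theorem cauchySeq_iterate_leaveOneOut (hb : IsBarycenter m n b) (hm : IsConicalMidpoint m)
    (hn : 2 ≤ n) (x : Fin (n + 1) → X) (i : Fin (n + 1)) :
    CauchySeq fun k ↦ (leaveOneOut b)^[k] x i := by
  have dist_le_diam (j l : Fin (n + 1)) : dist (x j) (x l) ≤ diam (range x) :=
    dist_le_diam_of_mem (finite_range x).isBounded (mem_range_self j) (mem_range_self l)
  refine cauchySeq_of_le_geometric_two (C := 2 * diam (range x)) fun k ↦ ?_
  set y := (leaveOneOut b)^[k] x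
  have near (j : Fin (n + 1)) : y j ∈ closedBall (y i) (diam (range x) / 2 ^ k) :=
    (hb.dist_iterate_leaveOneOut_le hn x k j i).trans (by gcongr; exact dist_le_diam j i)
  have step := hb.iterate_leaveOneOut_mem isClosed_closedBall
    (hm.isMidpointConvex_closedBall _ _) 1 near i
  rw [mul_div_cancel_left₀ _ two_ne_zero, iterate_succ_apply', dist_comm]
  exact step

theorem exists_tendsto_iterate_leaveOneOut [CompleteSpace X] (hb : IsBarycenter m n b)
    (hm : IsConicalMidpoint m) (hn : 2 ≤ n) (x : Fin (n + 1) → X) :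
    ∃ z, ∀ i, Tendsto (fun k ↦ (leaveOneOut b)^[k] x i) atTop (𝓝 z) := by
  obtain ⟨z, hz⟩ := cauchySeq_tendsto_of_complete (hb.cauchySeq_iterate_leaveOneOut hm hn x 0)
  refine ⟨z, fun i ↦ hz.congr_dist ?_⟩
  refine squeeze_zero (fun _ ↦ dist_nonneg) (fun k ↦ hb.dist_iterate_leaveOneOut_le hn x k 0 i) ?_
  exact tendsto_const_nhds.div_atTop (tendsto_pow_atTop_atTop_of_one_lt one_lt_two)

theorem of_tendsto_iterate_leaveOneOut (hb : IsBarycenter m n b) (hn : 0 < n)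
    {c : (Fin (n + 1) → X) → X}
    (hc : ∀ x i, Tendsto (fun k ↦ (leaveOneOut b)^[k] x i) atTop (𝓝 (c x))) :
    IsBarycenter m (n + 1) c where
  comp_perm x p := by
    have commutes : Semiconj (· ∘ p) (leaveOneOut b) (leaveOneOut b) :=
      fun y ↦ (hb.leaveOneOut_comp_perm y p).symm
    refine tendsto_nhds_unique (hc (x ∘ p) 0) ((hc x (p 0)).congr fun k ↦ ?_)
    exact congrFun ((commutes.iterate_right k).eq x) 0
  mul_dist_le x y := by
    have tendsto_sum := tendsto_finsetSum Finset.univ fun i _ ↦ (hc x i).dist (hc y i)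
    have := le_of_tendsto' tendsto_sum fun k ↦ hb.sum_dist_iterate_leaveOneOut_le hn k x y
    rwa [Finset.sum_const, Finset.card_fin, nsmul_eq_mul] at this
  map f hf hfm x := by
    have commutes : Semiconj (f ∘ ·) (leaveOneOut b) (leaveOneOut b) :=
      fun y ↦ funext fun i ↦ hb.map f hf hfm (i.removeNth y)
    refine tendsto_nhds_unique ((hf.tendsto _).comp (hc x 0)) ((hc (f ∘ x) 0).congr fun k ↦ ?_)
    exact congrFun ((commutes.iterate_right k).eq x).symm 0
  mem C hC hCm x hx :=
    hC.mem_of_tendsto (hc x 0) (.of_forall fun k ↦ hb.iterate_leaveOneOut_mem hC hCm k hx 0)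

end IsBarycenter

theorem IsConicalMidpoint.exists_isBarycenter [CompleteSpace X] (hm : IsConicalMidpoint m)
    (hn : 0 < n) : ∃ b, IsBarycenter m n b := by
  obtain rfl | two_le : n = 1 ∨ 2 ≤ n := by omega
  · exact ⟨_, isBarycenter_one m⟩
  clear hn
  induction n, two_le using Nat.le_induction with
  | base => exact ⟨_, hm.isBarycenter_two⟩
  | succ n two_le ih =>
    obtain ⟨b, hb⟩ := ih
    choose c hc using hb.exists_tendsto_iterate_leaveOneOut hm two_le
    exact ⟨c, hb.of_tendsto_iterate_leaveOneOut (by omega) hc⟩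

end Barycenters

section Packings

variable {X : Type*} [PseudoMetricSpace X] {ε : ℝ} {K : Set X} {n : ℕ}

/-- The `ε`-separated families of points of `K` indexed by `ι`. Separation is the closed condition
`ε ≤ dist`, which makes the set of packings of a compact set compact. -/
def packings (ε : ℝ) (K : Set X) (ι : Type*) : Set (ι → X) :=
  {x | (∀ i, x i ∈ K) ∧ Pairwise fun i j ↦ ε ≤ dist (x i) (x j)}

/-- No `ε`-packing of `K` has more than `n` points. Only packings indexed by types in `Type` are
considered, which loses nothing since finite families can be reindexed by `Fin`. -/
def IsPackingBound (ε : ℝ) (K : Set X) (n : ℕ) : Prop :=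
  ∀ (ι : Type) [Fintype ι], (packings ε K ι).Nonempty → Fintype.card ι ≤ n

theorem comp_mem_packings {ι κ : Type*} {x : ι → X} (hx : x ∈ packings ε K ι) {e : κ → ι}
    (he : Injective e) : x ∘ e ∈ packings ε K κ :=
  ⟨fun i ↦ hx.1 (e i), hx.2.comp_of_injective he⟩

theorem isCompact_packings {ι : Type*} (hK : IsCompact K) : IsCompact (packings ε K ι) := by
  have isClosed_separated : IsClosed {x : ι → X | Pairwise fun i j ↦ ε ≤ dist (x i) (x j)} := by
    simp only [Pairwise, ofPred_forall]
    refine isClosed_iInter fun i ↦ isClosed_iInter fun j ↦ isClosed_iInter fun _ ↦ ?_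
    exact isClosed_le continuous_const ((continuous_apply i).dist (continuous_apply j))
  have eq_inter : packings ε K ι =
      univ.pi (fun _ ↦ K) ∩ {x | Pairwise fun i j ↦ ε ≤ dist (x i) (x j)} := by
    ext x
    simp only [packings, mem_ofPred_eq, mem_inter_iff, mem_univ_pi]
  exact eq_inter ▸ (isCompact_univ_pi fun _ ↦ hK).inter_right isClosed_separated

theorem exists_isPackingBound (hK : TotallyBounded K) (hε : 0 < ε) : ∃ N, IsPackingBound ε K N := by
  obtain ⟨t, t_finite, K_subset⟩ := totallyBounded_iff.1 hK (ε / 2) (half_pos hε)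
  have := t_finite.fintype
  refine ⟨Fintype.card t, fun ι _ ⟨x, x_mem, x_separated⟩ ↦ ?_⟩
  have exists_center (i : ι) : ∃ c : t, dist (x i) c < ε / 2 := by
    simpa using K_subset (x_mem i)
  choose center hcenter using exists_center
  refine Fintype.card_le_of_injective center fun i j hij ↦ ?_
  by_contra hne
  have far : ε ≤ dist (x i) (x j) := x_separated hne
  have near_i := hcenter i
  have near_j := hcenter j
  rw [hij] at near_i
  linarith [dist_triangle_right (x i) (x j) (center j)]

theorem exists_packing_of_maximal_card (hK : TotallyBounded K) (hε : 0 < ε) :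
    ∃ n, (packings ε K (Fin n)).Nonempty ∧ IsPackingBound ε K n := by
  classical
  obtain ⟨N, hN⟩ := exists_isPackingBound hK hε
  have empty_packing : (packings ε K (Fin 0)).Nonempty :=
    ⟨finZeroElim, fun i ↦ i.elim0, fun i ↦ i.elim0⟩
  refine ⟨Nat.findGreatest (fun n ↦ (packings ε K (Fin n)).Nonempty) N,
    Nat.findGreatest_spec (P := fun n ↦ (packings ε K (Fin n)).Nonempty) N.zero_le empty_packing,
    fun ι _ ⟨x, hx⟩ ↦ Nat.le_findGreatest (hN ι ⟨x, hx⟩) ?_⟩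
  exact ⟨_, comp_mem_packings hx (Fintype.equivFin ι).symm.injective⟩

theorem sumElim_mem_packings {ι κ : Type*} {x : ι → X} {y : κ → X} (hx : x ∈ packings ε K ι)
    (hy : y ∈ packings ε K κ) (hxy : ∀ i j, ε ≤ dist (x i) (y j)) :
    Sum.elim x y ∈ packings ε K (ι ⊕ κ) := by
  refine ⟨Sum.forall.2 ⟨hx.1, hy.1⟩, ?_⟩
  rintro (i | i) (j | j) hij
  · exact hx.2 fun h ↦ hij (congrArg _ h)
  · exact hxy i j
  · exact (hxy j i).trans_eq (dist_comm _ _)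
  · exact hy.2 fun h ↦ hij (congrArg _ h)

theorem IsPackingBound.exists_perm_dist_le (hn : IsPackingBound ε K n) {x y : Fin n → X}
    (hx : x ∈ packings ε K (Fin n)) (hy : y ∈ packings ε K (Fin n)) :
    ∃ p : Equiv.Perm (Fin n), ∀ i, dist (x i) (y (p i)) ≤ ε := by
  classical
  let near (i : Fin n) : Finset (Fin n) := {j | dist (x i) (y j) < ε}
  -- The points `x i` with `i ∈ I` and the points `y j` far from all of them form a packing.
  have hall (I : Finset (Fin n)) : I.card ≤ (I.biUnion near).card := by
    have far (i : I) (j : ↥(I.biUnion near)ᶜ) : ε ≤ dist (x i) (y j) := by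
      by_contra! hlt
      exact Finset.mem_compl.1 j.2 (Finset.mem_biUnion.2 ⟨i, i.2, by simpa [near] using hlt⟩)
    have card_le := hn _ ⟨_, sumElim_mem_packings (comp_mem_packings hx Subtype.val_injective)
      (comp_mem_packings hy Subtype.val_injective) far⟩
    rw [Fintype.card_sum, Fintype.card_coe, Fintype.card_coe, Finset.card_compl,
      Fintype.card_fin] at card_le
    have := card_finset_fin_le (I.biUnion near)
    omega
  obtain ⟨p, p_injective, hp⟩ := (Finset.all_card_le_biUnion_card_iff_exists_injective near).1 hall
  refine ⟨Equiv.ofBijective p (Finite.injective_iff_bijective.1 p_injective), fun i ↦ ?_⟩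
  exact (Finset.mem_filter.1 (hp i)).2.le

end Packings

section FixedPoints

variable {X : Type*} [MetricSpace X] {m : X → X → X}

/-- `L` inherits from `K` its invariance under isometries commuting with `m` and its inclusion in
closed midpoint-convex sets. It need not be contained in `K`. -/
structure IsDescendant (m : X → X → X) (K L : Set X) : Prop where
  mapsTo : ∀ s : X → X, Isometry s → Semiconj₂ s m m → MapsTo s K K → MapsTo s L L
  subset : ∀ C : Set X, IsClosed C → IsMidpointConvex m C → K ⊆ C → L ⊆ C

theorem IsDescendant.trans {K L M : Set X} (hKL : IsDescendant m K L) (hLM : IsDescendant m L M) :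
    IsDescendant m K M where
  mapsTo s hs hsm hK := hLM.mapsTo s hs hsm (hKL.mapsTo s hs hsm hK)
  subset C hC hCm hK := hLM.subset C hC hCm (hKL.subset C hC hCm hK)

theorem IsBarycenter.isDescendant_image_packings {n : ℕ} {b : (Fin n → X) → X}
    (hb : IsBarycenter m n b) (ε : ℝ) (K : Set X) :
    IsDescendant m K (b '' packings ε K (Fin n)) where
  mapsTo := by
    rintro s hs hsm hK _ ⟨x, ⟨x_mem, x_separated⟩, rfl⟩
    refine ⟨s ∘ x, ⟨fun i ↦ hK (x_mem i), fun i j hij ↦ ?_⟩, (hb.map s hs.continuous hsm x).symm⟩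
    exact (x_separated hij).trans_eq (hs.dist_eq _ _).symm
  subset := by
    rintro C hC hCm hK _ ⟨x, ⟨x_mem, -⟩, rfl⟩
    exact hb.mem C hC hCm x fun i ↦ hK (x_mem i)

namespace IsConicalMidpoint

variable [CompleteSpace X]

theorem exists_isDescendant_dist_le (hm : IsConicalMidpoint m) (K : NonemptyCompacts X) {ε : ℝ}
    (hε : 0 < ε) :
    ∃ L : NonemptyCompacts X, IsDescendant m K L ∧ ∀ x ∈ L, ∀ y ∈ L, dist x y ≤ ε := by
  obtain ⟨n, packings_nonempty, n_max⟩ :=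
    exists_packing_of_maximal_card K.isCompact.totallyBounded hε
  have n_pos : 0 < n := by
    obtain ⟨a, ha⟩ := K.nonempty
    exact n_max Unit ⟨fun _ ↦ a, fun _ ↦ ha, Subsingleton.pairwise⟩
  obtain ⟨b, hb⟩ := hm.exists_isBarycenter n_pos
  let L : NonemptyCompacts X :=
    ⟨⟨b '' packings ε K (Fin n), (isCompact_packings K.isCompact).image (hb.continuous n_pos)⟩,
      packings_nonempty.image b⟩
  refine ⟨L, hb.isDescendant_image_packings ε K, ?_⟩
  rintro _ ⟨x, hx, rfl⟩ _ ⟨y, hy, rfl⟩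
  obtain ⟨p, hp⟩ := n_max.exists_perm_dist_le hx hy
  rw [← hb.comp_perm y p]
  exact hb.dist_le_of_forall_dist_le n_pos hp

theorem exists_seq_isDescendant (hm : IsConicalMidpoint m) (K : NonemptyCompacts X) :
    ∃ L : ℕ → NonemptyCompacts X, (∀ k, IsDescendant m K (L k)) ∧
      (∀ k, IsDescendant m (L k) (L (k + 1))) ∧
      ∀ k, ∀ x ∈ L k, ∀ y ∈ L k, dist x y ≤ 1 / 2 / 2 ^ k := by
  have exists_next (k : ℕ) (K : NonemptyCompacts X) := hm.exists_isDescendant_dist_le K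
    (by positivity : (0 : ℝ) < 1 / 2 / 2 ^ k)
  choose next next_isDescendant next_dist_le using exists_next
  obtain ⟨L, L_zero, L_succ⟩ : ∃ L : ℕ → NonemptyCompacts X,
      L 0 = next 0 K ∧ ∀ k, L (k + 1) = next (k + 1) (L k) :=
    ⟨fun k ↦ k.rec (next 0 K) fun j ↦ next (j + 1), rfl, fun _ ↦ rfl⟩
  have L_step (k : ℕ) : IsDescendant m (L k) (L (k + 1)) := by
    rw [L_succ]
    exact next_isDescendant (k + 1) (L k)
  refine ⟨L, fun k ↦ ?_, L_step, fun k ↦ ?_⟩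
  · induction k with
    | zero => exact L_zero ▸ next_isDescendant 0 K
    | succ k ih => exact ih.trans (L_step k)
  · cases k with
    | zero => exact L_zero ▸ next_dist_le 0 K
    | succ k => exact L_succ k ▸ next_dist_le (k + 1) (L k)

end IsConicalMidpoint

theorem isFixedPt_of_tendsto_dist {s : X → X} (hs : Continuous s) {ι : Type*} {l : Filter ι}
    [l.NeBot] {x : ι → X} {z : X} (hx : Tendsto x l (𝓝 z))
    (hsx : Tendsto (fun k ↦ dist (x k) (s (x k))) l (𝓝 0)) : IsFixedPt s z :=
  tendsto_nhds_unique ((hs.tendsto z).comp hx) (hx.congr_dist hsx)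

theorem fixed_point_of_equivariant_semigroup_with_invariant_compact_general [CompleteSpace X]
    (hm : IsConicalMidpoint m) {S : Set (X → X)} (hiso : ∀ s ∈ S, Isometry s)
    (hequiv : ∀ s ∈ S, Semiconj₂ s m m) {K : Set X} (hK : IsCompact K) (hKne : K.Nonempty)
    (hinv : ∀ s ∈ S, MapsTo s K K) {C : Set X} (hC : IsClosed C) (hCm : IsMidpointConvex m C)
    (hKC : K ⊆ C) : ∃ z ∈ C, ∀ s ∈ S, s z = z := by
  obtain ⟨L, L_of_K, L_step, L_small⟩ := hm.exists_seq_isDescendant ⟨⟨K, hK⟩, hKne⟩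
  choose x hx using fun k ↦ (L k).nonempty
  have x_cauchy : CauchySeq x := by
    refine cauchySeq_of_le_geometric_two (C := 1) fun k ↦ ?_
    have L_subset_ball := (L_step k).subset _ isClosed_closedBall
      (hm.isMidpointConvex_closedBall (x k) _) fun y hy ↦ L_small k y hy (x k) (hx k)
    exact (dist_comm _ _).trans_le (L_subset_ball (hx (k + 1)))
  obtain ⟨z, hz⟩ := cauchySeq_tendsto_of_complete x_cauchy
  have x_mem (k : ℕ) : x k ∈ C := (L_of_K k).subset C hC hCm hKC (hx k)
  refine ⟨z, hC.mem_of_tendsto hz (.of_forall x_mem), fun s hs ↦ ?_⟩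
  have s_moves_little (k : ℕ) : dist (x k) (s (x k)) ≤ 1 / 2 / 2 ^ k :=
    L_small k _ (hx k) _ ((L_of_K k).mapsTo s (hiso s hs) (hequiv s hs) (hinv s hs) (hx k))
  refine isFixedPt_of_tendsto_dist (hiso s hs).continuous hz
    (squeeze_zero (fun _ ↦ dist_nonneg) s_moves_little ?_)
  exact tendsto_const_nhds.div_atTop (tendsto_pow_atTop_atTop_of_one_lt one_lt_two)

end FixedPoints

theorem fixed_point_of_equivariant_semigroup_with_invariant_compact
    {X : Type*} [MetricSpace X] [CompleteSpace X]
    (σ : X → X → ℝ → X) (hσ : IsConicalBicombing σ) (hmid : MidpointProp σ)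
    (S : Set (X → X))
    (hiso : ∀ s ∈ S, Isometry s ∧ Function.Surjective s)
    (hcomp : ∀ s ∈ S, ∀ t ∈ S, s ∘ t ∈ S)
    (hequiv : ∀ s ∈ S, SigmaEquivariant σ s)
    (K : Set X) (hK : IsCompact K) (hKne : K.Nonempty)
    (hinv : ∀ s ∈ S, s '' K = K) :
    ∃ xs ∈ closure (convSigma σ K), ∀ s ∈ S, s xs = xs :=
  have hm := hσ.isConicalMidpoint hmid
  fixed_point_of_equivariant_semigroup_with_invariant_compact_general hm
    (fun s hs ↦ (hiso s hs).1) (fun s hs x y ↦ hequiv s hs x y (1 / 2) half_mem_Icc_zero_one)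
    hK hKne (fun s hs ↦ mapsTo_iff_image_subset.2 (hinv s hs).subset) isClosed_closure
    (hm.isMidpointConvex_closure (hσ.isMidpointConvex_convSigma K))
    ((subset_convSigma σ K).trans subset_closure)
end

section
/- The Banach space (ℓ¹(ℤ), ‖·‖_⋆) is strictly convex: for all distinct x, y ∈ ℓ¹(ℤ) with ‖x‖_⋆ = ‖y‖_⋆ = 1 and every λ ∈ (0,1), one has ‖(1−λ)x + λy‖_⋆ < 1. -/
/-- The norm `‖x‖_⋆ = sqrt((Σ|x_k|)² + Σ|x_k|²)` on `ℓ¹(ℤ)`. -/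
noncomputable def starNorm (x : lp (fun _ : ℤ => ℝ) 1) : ℝ :=
  Real.sqrt ((∑' k : ℤ, |x k|) ^ 2 + ∑' k : ℤ, |x k| ^ 2)

/-!
Writing `ι : ℓ¹ → ℓ²` for the inclusion, `‖x‖_⋆² = ‖x‖₁² + ‖ι x‖₂²`. The first summand is convex;
the second is strictly convex, because `ℓ²` is a strictly convex space and `ι` is injective. So
`‖·‖_⋆²` is a strictly convex function.
-/

open Set
open scoped ENNReal

section StrictConvexOn

theorem strictConvexOn_comp_linearMap_of_injective {𝕜 E F β : Type*} [Semiring 𝕜] [PartialOrder 𝕜]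
    [AddCommMonoid E] [AddCommMonoid F] [AddCommMonoid β] [PartialOrder β]
    [Module 𝕜 E] [Module 𝕜 F] [SMul 𝕜 β] {f : F → β} {s : Set F}
    (hf : StrictConvexOn 𝕜 s f) {g : E →ₗ[𝕜] F} (hg : Function.Injective g) :
    StrictConvexOn 𝕜 (g ⁻¹' s) (f ∘ g) := by
  refine ⟨hf.1.linear_preimage g, fun x hx y hy hxy a b ha hb hab ↦ ?_⟩
  simpa only [Function.comp_apply, map_add, map_smul] using hf.2 hx hy (hg.ne hxy) ha hb hab

variable {E : Type*} [NormedAddCommGroup E] [NormedSpace ℝ E]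

-- Points of equal norm are separated by strict convexity of the space, points of different norm by
-- strict convexity of `t ↦ t ^ n`.
theorem strictConvexOn_univ_norm_pow [StrictConvexSpace ℝ E] {n : ℕ} (hn : 2 ≤ n) :
    StrictConvexOn ℝ univ fun x : E ↦ ‖x‖ ^ n := by
  refine ⟨convex_univ, fun x _ y _ hxy a b ha hb hab ↦ ?_⟩
  rcases eq_or_ne ‖x‖ ‖y‖ with hnorm | hnorm
  · calc ‖a • x + b • y‖ ^ n < ‖y‖ ^ n :=
          pow_lt_pow_left₀ (norm_combo_lt_of_ne hnorm.le le_rfl hxy ha hb hab) (norm_nonneg _)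
            (by lia)
      _ = a • ‖x‖ ^ n + b • ‖y‖ ^ n := by rw [hnorm, Convex.combo_self hab]
  · calc ‖a • x + b • y‖ ^ n ≤ (a • ‖x‖ + b • ‖y‖) ^ n :=
          pow_le_pow_left₀ (norm_nonneg _)
            (convexOn_univ_norm.2 (mem_univ x) (mem_univ y) ha.le hb.le hab) n
      _ < a • ‖x‖ ^ n + b • ‖y‖ ^ n :=
          (strictConvexOn_pow hn).2 (norm_nonneg x) (norm_nonneg y) hnorm ha hb hab

theorem strictConvexOn_univ_norm_pow_add_norm_map_pow {F : Type*} [NormedAddCommGroup F]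
    [NormedSpace ℝ F] [StrictConvexSpace ℝ F] {T : E →ₗ[ℝ] F} (hT : Function.Injective T)
    (m : ℕ) {n : ℕ} (hn : 2 ≤ n) :
    StrictConvexOn ℝ univ fun x ↦ ‖x‖ ^ m + ‖T x‖ ^ n :=
  (convexOn_univ_norm.pow (fun _ _ ↦ norm_nonneg _) m).add_strictConvexOn
    (strictConvexOn_comp_linearMap_of_injective (strictConvexOn_univ_norm_pow hn) hT)

end StrictConvexOn

section lp

variable {α : Type*} {E : α → Type*} [∀ i, NormedAddCommGroup (E i)]

theorem lp_one_norm_eq_tsum (f : lp E 1) : ‖f‖ = ∑' i, ‖f i‖ := by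
  simpa using lp.norm_rpow_eq_tsum (by simp) f

theorem lp_two_norm_sq_eq_tsum (f : lp E 2) : ‖f‖ ^ 2 = ∑' i, ‖f i‖ ^ 2 := by
  simpa using lp.norm_rpow_eq_tsum (by simp) f

theorem lp_linearMapOfLE_injective (𝕜 : Type*) [NormedRing 𝕜] [∀ i, Module 𝕜 (E i)]
    [∀ i, IsBoundedSMul 𝕜 (E i)] {p q : ℝ≥0∞} (h : p ≤ q) :
    Function.Injective (lp.linearMapOfLE 𝕜 E h) := fun f g hfg ↦
  lp.ext <| by simpa only [lp.coe_linearMapOfLE_apply] using congrArg (fun u : lp E q ↦ ⇑u) hfg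

end lp

theorem starNorm_nonneg (x : lp (fun _ : ℤ => ℝ) 1) : 0 ≤ starNorm x :=
  Real.sqrt_nonneg _

theorem starNorm_sq (x : lp (fun _ : ℤ => ℝ) 1) :
    starNorm x ^ 2 = ‖x‖ ^ 2 + ‖lp.linearMapOfLE ℝ (fun _ : ℤ => ℝ) one_le_two x‖ ^ 2 := by
  rw [starNorm, Real.sq_sqrt (by positivity), lp_one_norm_eq_tsum, lp_two_norm_sq_eq_tsum]
  simp only [lp.coe_linearMapOfLE_apply, Real.norm_eq_abs]

theorem strictConvexOn_univ_starNorm_sq : StrictConvexOn ℝ univ fun x ↦ starNorm x ^ 2 := by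
  simpa only [starNorm_sq] using
    strictConvexOn_univ_norm_pow_add_norm_map_pow (lp_linearMapOfLE_injective ℝ one_le_two) 2 le_rfl

theorem starNorm_strictly_convex (x y : lp (fun _ : ℤ => ℝ) 1) (hxy : x ≠ y)
    (hx : starNorm x = 1) (hy : starNorm y = 1)
    (l : ℝ) (hl : l ∈ Set.Ioo (0:ℝ) 1) :
    starNorm ((1 - l) • x + l • y) < 1 := by
  obtain ⟨hl_pos, hl_lt_one⟩ := hl
  rw [← sq_lt_one_iff₀ (starNorm_nonneg _)]
  calc starNorm ((1 - l) • x + l • y) ^ 2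
      < (1 - l) • starNorm x ^ 2 + l • starNorm y ^ 2 :=
        strictConvexOn_univ_starNorm_sq.2 (mem_univ x) (mem_univ y) hxy (sub_pos.2 hl_lt_one)
          hl_pos (sub_add_cancel 1 l)
    _ = 1 := by rw [hx, hy, one_pow, Convex.combo_self (sub_add_cancel 1 l)]
end

section
/- If x is an element of the convex hull conv(A) of the set A := {T^k(x₀) : k ∈ ℤ} in ℓ¹(ℤ), then 1 ≤ ‖x‖_⋆ ≤ √2. -/
/-- The `n`-th power of the shift map `T` on `ℓ¹(ℤ)`: `(T^n x)_k = x_{k-n}`. -/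
noncomputable def shiftPow (n : ℤ) (x : lp (fun _ : ℤ => ℝ) 1) : lp (fun _ : ℤ => ℝ) 1 :=
  ⟨fun k => x (k - n), by
    apply memℓp_gen
    have h : Summable fun k : ℤ => ‖x k‖ ^ (1 : ENNReal).toReal :=
      (lp.memℓp x).summable (by norm_num)
    exact ((Equiv.subRight n).summable_iff
      (f := fun k : ℤ => ‖x k‖ ^ (1 : ENNReal).toReal)).mpr h⟩

/-- The sequence with entry `1` at index `0` and `0` elsewhere. -/
noncomputable def xZero : lp (fun _ : ℤ => ℝ) 1 := lp.single 1 (0:ℤ) (1:ℝ)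

/-!
The `ℓ¹` norm satisfies `‖x‖ ≤ ‖x‖_⋆ ≤ √2 ‖x‖`, because `Σ|x_k|² ≤ (Σ|x_k|)²`, so it suffices that
`‖x‖ = 1` on the convex hull. The orbit of `x₀` consists of the standard unit vectors, which lie on
the face of the unit ball of `ℓ¹` cut out by the norm-one functional `x ↦ Σ x_k`; convex
combinations stay on that face.
-/

theorem tsum_sq_le_sq_tsum_of_nonneg {ι : Type*} {f : ι → ℝ} (hf : ∀ i, 0 ≤ f i)
    (hsum : Summable f) : ∑' i, f i ^ 2 ≤ (∑' i, f i) ^ 2 := by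
  have sq_le (i : ι) : f i ^ 2 ≤ (∑' j, f j) * f i := by
    rw [sq]
    exact mul_le_mul_of_nonneg_right (hsum.le_tsum i fun j _ => hf j) (hf i)
  have summable_mul : Summable fun i => (∑' j, f j) * f i := hsum.mul_left _
  have summable_sq : Summable fun i => f i ^ 2 :=
    summable_mul.of_nonneg_of_le (fun i => sq_nonneg (f i)) sq_le
  calc ∑' i, f i ^ 2 ≤ ∑' i, (∑' j, f j) * f i := summable_sq.tsum_le_tsum sq_le summable_mul
    _ = (∑' i, f i) ^ 2 := by rw [tsum_mul_left, sq]

theorem norm_eq_of_mem_convexHull_of_le_dual {E : Type*} [SeminormedAddCommGroup E]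
    [NormedSpace ℝ E] {s : Set E} {r : ℝ} {f : StrongDual ℝ E} (hf : ‖f‖ ≤ 1)
    (hfs : ∀ y ∈ s, r ≤ f y) (hs : ∀ y ∈ s, ‖y‖ ≤ r) {x : E} (hx : x ∈ convexHull ℝ s) :
    ‖x‖ = r := by
  have norm_le : x ∈ Metric.closedBall 0 r :=
    convexHull_min (fun y hy => mem_closedBall_zero_iff.2 (hs y hy)) (convex_closedBall 0 r) hx
  have le_dual : x ∈ {y | r ≤ f y} :=
    convexHull_min hfs (convex_halfSpace_ge f.toLinearMap.isLinear r) hx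
  refine le_antisymm (mem_closedBall_zero_iff.1 norm_le) ?_
  calc r ≤ f x := le_dual
    _ ≤ ‖f x‖ := Real.le_norm_self _
    _ ≤ ‖x‖ := by simpa only [one_mul] using f.le_of_opNorm_le hf x

theorem norm_eq_one_of_mem_convexHull_range_lp_single {ι : Type*} [DecidableEq ι]
    {x : lp (fun _ : ι => ℝ) 1}
    (hx : x ∈ convexHull ℝ (Set.range fun i : ι => lp.single 1 i (1 : ℝ))) : ‖x‖ = 1 := by
  refine norm_eq_of_mem_convexHull_of_le_dual (f := lp.tsumCLM ℝ ι ℝ) lp.norm_tsumCLM_le ?_ ?_ hx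
  · rintro _ ⟨i, rfl⟩
    simp
  · rintro _ ⟨i, rfl⟩
    simp

theorem lp_one_hasSum_norm {ι : Type*} {E : ι → Type*} [∀ i, NormedAddCommGroup (E i)]
    (x : lp E 1) : HasSum (fun i => ‖x i‖) ‖x‖ := by
  simpa only [ENNReal.toReal_one, Real.rpow_one] using lp.hasSum_norm (by norm_num) x

theorem starNorm_eq_sqrt_norm_sq_add (x : lp (fun _ : ℤ => ℝ) 1) :
    starNorm x = √(‖x‖ ^ 2 + ∑' k, |x k| ^ 2) := by
  simp only [starNorm, ← (lp_one_hasSum_norm x).tsum_eq, Real.norm_eq_abs]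

theorem norm_le_starNorm (x : lp (fun _ : ℤ => ℝ) 1) : ‖x‖ ≤ starNorm x := by
  rw [starNorm_eq_sqrt_norm_sq_add]
  exact Real.le_sqrt_of_sq_le (le_add_of_nonneg_right (tsum_nonneg fun k => sq_nonneg |x k|))

theorem starNorm_le_sqrt_two_mul_norm (x : lp (fun _ : ℤ => ℝ) 1) :
    starNorm x ≤ √2 * ‖x‖ := by
  have tsum_sq_le : ∑' k, |x k| ^ 2 ≤ ‖x‖ ^ 2 := by
    rw [← (lp_one_hasSum_norm x).tsum_eq]
    exact tsum_sq_le_sq_tsum_of_nonneg (fun k => abs_nonneg (x k)) (lp_one_hasSum_norm x).summable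
  calc starNorm x = √(‖x‖ ^ 2 + ∑' k, |x k| ^ 2) := starNorm_eq_sqrt_norm_sq_add x
    _ ≤ √(2 * ‖x‖ ^ 2) := Real.sqrt_le_sqrt (by linarith)
    _ = √2 * ‖x‖ := by rw [Real.sqrt_mul zero_le_two, Real.sqrt_sq (norm_nonneg x)]

theorem shiftPow_xZero (n : ℤ) : shiftPow n xZero = lp.single 1 n (1 : ℝ) := by
  ext k
  change xZero (k - n) = _
  simp [xZero, Pi.single_apply, sub_eq_zero]

theorem starNorm_bounds_on_convexHull_of_shift_orbit
    (x : lp (fun _ : ℤ => ℝ) 1)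
    (hx : x ∈ convexHull ℝ (Set.range fun n : ℤ => shiftPow n xZero)) :
    1 ≤ starNorm x ∧ starNorm x ≤ Real.sqrt 2 := by
  simp only [shiftPow_xZero] at hx
  have norm_eq_one : ‖x‖ = 1 := norm_eq_one_of_mem_convexHull_range_lp_single hx
  exact ⟨norm_eq_one ▸ norm_le_starNorm x,
    by simpa only [norm_eq_one, mul_one] using starNorm_le_sqrt_two_mul_norm x⟩
end

section
/- Let (E, ‖·‖) be a Banach space. Then the map μ ↦ ∫_E x dμ(x) (Bochner integral) is a well-defined contracting barycenter map on P₁(E), and it is the only one: every contracting barycenter map β : P₁(E) → E satisfies β(μ) = ∫_E x dμ(x) for all μ ∈ P₁(E). -/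
open MeasureTheory

/-- The first Wasserstein distance, via Kantorovich–Rubinstein duality:
`W¹(μ,ν) = sup { ∫ f dμ − ∫ f dν : f 1-Lipschitz }`. -/
noncomputable def W1 {X : Type*} [MetricSpace X] [MeasurableSpace X]
    (μ ν : Measure X) : ℝ :=
  sSup {r : ℝ | ∃ f : X → ℝ, LipschitzWith 1 f ∧ r = ∫ x, f x ∂μ - ∫ x, f x ∂ν}

/-- The support of a measure: all points whose open neighbourhoods have positive measure. -/
def mSupport {X : Type*} [TopologicalSpace X] [MeasurableSpace X] (μ : Measure X) : Set X :=
  {x | ∀ U : Set X, IsOpen U → x ∈ U → 0 < μ U}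

/-- `μ ∈ P₁(X)`: a Radon probability measure with finite first moment. -/
def MemP1 {X : Type*} [MetricSpace X] [MeasurableSpace X] (μ : Measure X) : Prop :=
  IsProbabilityMeasure μ ∧ (∀ K : Set X, IsCompact K → μ K < ⊤) ∧
  μ.InnerRegularWRT IsCompact MeasurableSet ∧
  ∃ x₀ : X, HasFiniteIntegral (fun x => dist x x₀) μ
/-- A contracting barycenter map on `P₁(X)`. -/
def IsContractingBarycenter {X : Type*} [MetricSpace X] [MeasurableSpace X]
    (β : Measure X → X) : Prop :=
  (∀ x : X, β (Measure.dirac x) = x) ∧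
  ∀ μ ν : Measure X, MemP1 μ → MemP1 ν → dist (β μ) (β ν) ≤ W1 μ ν

/-!
For a contracting barycenter map `β`, comparing `μ` with Dirac masses gives
`‖β μ - x‖ ≤ ∫ ‖y - x‖ ∂μ(y)` for every `x`, and this alone forces `β μ` to be the mean. Let `x`
escape to infinity as `-t • v`, where `v` is a point of differentiability of the norm: since
`‖y + t • v‖ - t * ‖v‖ → D y`, with `D` the derivative of the norm at `v`, the inequality becomes
`D (β μ) ≤ ∫ D y ∂μ(y)`. If such `v` are dense, then choosing `v` close to `u = β μ - ∫ y ∂μ(y)`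
gives `‖u‖ ≤ 0`, because `D v = ‖v‖` and `‖D‖ ≤ 1`. In finite dimension the density is Rademacher's
theorem. In general the values of a simple function together with `β μ` span a finite-dimensional
subspace, so the argument is run with an error `ε`, which accounts for approximating the identity
by a simple function in `L¹(μ)`.
-/

open Filter Topology Set

section NormDerivative

variable {E : Type*} [NormedAddCommGroup E] [NormedSpace ℝ E]

theorem tendsto_norm_add_smul_sub_mul_norm {v : E} {D : E →L[ℝ] ℝ}
    (hD : HasFDerivAt (‖·‖) D v) (y : E) :
    Tendsto (fun t : ℝ => ‖y + t • v‖ - t * ‖v‖) atTop (𝓝 (D y)) := by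
  refine (hD.lim_real y).congr' ?_
  filter_upwards [eventually_gt_atTop 0] with t ht
  have hscale : y + t • v = t • (v + t⁻¹ • y) := by
    rw [smul_add, smul_inv_smul₀ ht.ne', add_comm]
  rw [hscale, norm_smul, Real.norm_of_nonneg ht.le, smul_eq_mul, mul_sub]

variable {Ω : Type*} [MeasurableSpace Ω] {μ : Measure Ω} {h : Ω → E}

theorem tendsto_integral_norm_add_smul_sub_mul_norm {v : E} {D : E →L[ℝ] ℝ}
    (hD : HasFDerivAt (‖·‖) D v) (hh : Integrable h μ) :
    Tendsto (fun t : ℝ => ∫ ω, (‖h ω + t • v‖ - t * ‖v‖) ∂μ) atTop (𝓝 (∫ ω, D (h ω) ∂μ)) := by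
  refine tendsto_integral_filter_of_dominated_convergence (fun ω => ‖h ω‖)
    (.of_forall fun t => ?_) ?_ hh.norm
    (.of_forall fun ω => tendsto_norm_add_smul_sub_mul_norm hD (h ω))
  · exact (hh.1.add aestronglyMeasurable_const).norm.sub aestronglyMeasurable_const
  · filter_upwards [eventually_ge_atTop 0] with t ht
    refine .of_forall fun ω => ?_
    calc ‖‖h ω + t • v‖ - t * ‖v‖‖ = |‖h ω + t • v‖ - ‖t • v‖| := by
          rw [norm_smul, Real.norm_of_nonneg ht, Real.norm_eq_abs]
      _ ≤ ‖h ω + t • v - t • v‖ := abs_norm_sub_norm_le _ _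
      _ = ‖h ω‖ := by rw [add_sub_cancel_right]

variable [IsProbabilityMeasure μ] {b : E} {ε : ℝ}

theorem apply_le_integral_apply_add_of_forall_norm_sub_le {v : E} {D : E →L[ℝ] ℝ}
    (hD : HasFDerivAt (‖·‖) D v) (hh : Integrable h μ)
    (hb : ∀ x, ‖b - x‖ ≤ ∫ ω, ‖h ω - x‖ ∂μ + ε) :
    D b ≤ ∫ ω, D (h ω) ∂μ + ε := by
  refine le_of_tendsto_of_tendsto' (tendsto_norm_add_smul_sub_mul_norm hD b)
    ((tendsto_integral_norm_add_smul_sub_mul_norm hD hh).add_const ε) fun t => ?_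
  have hint : Integrable (fun ω => ‖h ω + t • v‖) μ := (hh.add (integrable_const _)).norm
  have hbt : ‖b + t • v‖ ≤ ∫ ω, ‖h ω + t • v‖ ∂μ + ε := by
    simpa only [sub_neg_eq_add] using hb (-(t • v))
  rw [integral_sub hint (integrable_const _), integral_const, probReal_univ, one_smul]
  linarith

theorem norm_sub_integral_le_of_dense_differentiableAt_norm [CompleteSpace E]
    (hdense : Dense {v : E | DifferentiableAt ℝ (‖·‖) v}) (hh : Integrable h μ)
    (hb : ∀ x, ‖b - x‖ ≤ ∫ ω, ‖h ω - x‖ ∂μ + ε) :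
    ‖b - ∫ ω, h ω ∂μ‖ ≤ ε := by
  set u := b - ∫ ω, h ω ∂μ with hu
  suffices hbound : ∀ v, ‖v‖ ≤ ε + ‖v - u‖ by simpa using hbound u
  refine hdense.induction (fun v hv => ?_) (isClosed_le (by fun_prop) (by fun_prop))
  have hDv : fderiv ℝ (‖·‖) v v = ‖v‖ := DifferentiableAt.fderiv_norm_self hv
  set D := fderiv ℝ (‖·‖) v
  have hD : ‖D‖ ≤ 1 := hv.hasFDerivAt.le_of_lipschitz lipschitzWith_one_norm
  have hDu : D u ≤ ε := by
    have := apply_le_integral_apply_add_of_forall_norm_sub_le hv.hasFDerivAt hh hb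
    rw [D.integral_comp_comm hh] at this
    rw [hu, map_sub]
    linarith
  have hDvu : D (v - u) ≤ ‖v - u‖ :=
    (le_abs_self _).trans (by simpa using D.le_of_opNorm_le hD (v - u))
  calc ‖v‖ = D u + D (v - u) := by rw [← map_add, add_sub_cancel, hDv]
    _ ≤ ε + ‖v - u‖ := add_le_add hDu hDvu

end NormDerivative

theorem exists_simpleFunc_integral_norm_sub_lt {Ω E : Type*} [MeasurableSpace Ω]
    [NormedAddCommGroup E] {μ : Measure Ω} {h : Ω → E} (hh : Integrable h μ) {ε : ℝ}
    (hε : 0 < ε) : ∃ g : SimpleFunc Ω E, Integrable g μ ∧ ∫ ω, ‖h ω - g ω‖ ∂μ < ε := by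
  obtain ⟨g, hgε, hg⟩ := (memLp_one_iff_integrable.2 hh).exists_simpleFunc_eLpNorm_sub_lt
    ENNReal.one_ne_top (ENNReal.ofReal_pos.2 hε).ne'
  have hgint : Integrable g μ := memLp_one_iff_integrable.1 hg
  refine ⟨g, hgint, ?_⟩
  rw [eLpNorm_one_eq_lintegral_enorm] at hgε
  calc ∫ ω, ‖h ω - g ω‖ ∂μ = (∫⁻ ω, ‖(h - g) ω‖ₑ ∂μ).toReal :=
        integral_norm_eq_lintegral_enorm (hh.sub hgint).1
    _ < ε := ENNReal.toReal_lt_of_lt_ofReal hgε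

section BanachValued

variable {E : Type*} [NormedAddCommGroup E] [NormedSpace ℝ E] [CompleteSpace E]
  {Ω : Type*} [MeasurableSpace Ω] {μ : Measure Ω} [IsProbabilityMeasure μ] {b : E}

theorem norm_sub_integral_le_of_mem_finiteDimensional {G : Submodule ℝ E} [FiniteDimensional ℝ G]
    {h : Ω → E} (hh : Integrable h μ) (hG : ∀ ω, h ω ∈ G) (hbG : b ∈ G) {ε : ℝ}
    (hb : ∀ x ∈ G, ‖b - x‖ ≤ ∫ ω, ‖h ω - x‖ ∂μ + ε) :
    ‖b - ∫ ω, h ω ∂μ‖ ≤ ε := by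
  lift h to Ω → G using hG
  lift b to G using hbG
  have hh' : Integrable h μ :=
    (G.subtypeₗᵢ.lipschitz.integrable_comp_iff_of_antilipschitz
      G.subtypeₗᵢ.antilipschitz (map_zero _)).1 hh
  have := norm_sub_integral_le_of_dense_differentiableAt_norm dense_differentiableAt_norm hh'
    fun x => hb x x.2
  have hcoe : ∫ ω, (h ω : E) ∂μ = (∫ ω, h ω ∂μ : G) := G.subtypeL.integral_comp_comm hh'
  rwa [hcoe]

theorem norm_sub_integral_simpleFunc_le (g : SimpleFunc Ω E) {ε : ℝ}
    (hb : ∀ x, ‖b - x‖ ≤ ∫ ω, ‖g ω - x‖ ∂μ + ε) :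
    ‖b - ∫ ω, g ω ∂μ‖ ≤ ε := by
  have : FiniteDimensional ℝ (Submodule.span ℝ (insert b (range g))) :=
    FiniteDimensional.span_of_finite ℝ (g.finite_range.insert b)
  exact norm_sub_integral_le_of_mem_finiteDimensional g.integrable_of_isFiniteMeasure
    (fun ω => Submodule.subset_span (mem_insert_of_mem b (mem_range_self ω)))
    (Submodule.subset_span (mem_insert b _)) fun x _ => hb x

theorem eq_integral_of_forall_norm_sub_le {h : Ω → E} (hh : Integrable h μ)
    (hb : ∀ x, ‖b - x‖ ≤ ∫ ω, ‖h ω - x‖ ∂μ) : b = ∫ ω, h ω ∂μ := by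
  refine eq_of_forall_dist_le fun ε hε => ?_
  obtain ⟨g, hg, hgε⟩ := exists_simpleFunc_integral_norm_sub_lt hh (half_pos hε)
  have hbg : ‖b - ∫ ω, g ω ∂μ‖ ≤ ε / 2 := norm_sub_integral_simpleFunc_le g fun x => by
    have hgx : Integrable (fun ω => ‖g ω - x‖) μ := (hg.sub (integrable_const x)).norm
    calc ‖b - x‖ ≤ ∫ ω, ‖h ω - x‖ ∂μ := hb x
      _ ≤ ∫ ω, (‖g ω - x‖ + ‖h ω - g ω‖) ∂μ :=
        integral_mono (hh.sub (integrable_const x)).norm (hgx.add (hh.sub hg).norm) fun ω => by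
          simpa only [add_comm] using norm_sub_le_norm_sub_add_norm_sub (h ω) (g ω) x
      _ = ∫ ω, ‖g ω - x‖ ∂μ + ∫ ω, ‖h ω - g ω‖ ∂μ := integral_add hgx (hh.sub hg).norm
      _ ≤ ∫ ω, ‖g ω - x‖ ∂μ + ε / 2 := by gcongr
  have hgh : ‖∫ ω, g ω ∂μ - ∫ ω, h ω ∂μ‖ ≤ ε / 2 := by
    rw [norm_sub_rev, ← integral_sub hh hg]
    exact (norm_integral_le_integral_norm _).trans hgε.le
  rw [dist_eq_norm]
  linarith [norm_sub_le_norm_sub_add_norm_sub b (∫ ω, g ω ∂μ) (∫ ω, h ω ∂μ)]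

end BanachValued

section Tight

variable {X : Type*} [TopologicalSpace X] [MeasurableSpace X] {μ : Measure X}

theorem exists_isSigmaCompact_ae_mem (hμ : IsTightMeasureSet {μ}) :
    ∃ s : Set X, IsSigmaCompact s ∧ ∀ᵐ x ∂μ, x ∈ s := by
  rw [isTightMeasureSet_iff_exists_isCompact_measure_compl_le] at hμ
  choose K hK hμK using fun n : ℕ => hμ (n : ENNReal)⁻¹ (by simp)
  refine ⟨⋃ n, K n, isSigmaCompact_iUnion_of_isCompact K hK, ?_⟩
  refine le_antisymm (ge_of_tendsto' ENNReal.tendsto_inv_nat_nhds_zero fun n => ?_) zero_le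
  calc μ (⋃ n, K n)ᶜ ≤ μ (K n)ᶜ := measure_mono (compl_subset_compl.2 (subset_iUnion K n))
    _ ≤ (n : ENNReal)⁻¹ := hμK n μ rfl

theorem aestronglyMeasurable_of_continuous_of_isTightMeasureSet [OpensMeasurableSpace X] {Y : Type*}
    [TopologicalSpace Y] [TopologicalSpace.PseudoMetrizableSpace Y] (hμ : IsTightMeasureSet {μ})
    {f : X → Y} (hf : Continuous f) : AEStronglyMeasurable f μ := by
  borelize Y
  obtain ⟨s, hs, hμs⟩ := exists_isSigmaCompact_ae_mem hμ
  obtain ⟨K, hK, hKs⟩ := hs.image hf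
  refine aestronglyMeasurable_iff_aemeasurable_separable.2 ⟨hf.aemeasurable, f '' s, ?_, ?_⟩
  · exact hKs ▸ .iUnion fun n => (hK n).isSeparable
  · exact hμs.mono fun x hx => mem_image_of_mem f hx

end Tight

section WassersteinSpace

variable {X : Type*} [MetricSpace X] [MeasurableSpace X] [OpensMeasurableSpace X]
  {μ ν : Measure X}

theorem memP1_dirac (x : X) : MemP1 (Measure.dirac x) := by
  refine ⟨inferInstance, fun K _ => measure_lt_top _ K, fun A hA r hr => ?_, x,
    (integrable_dirac (by simp)).2⟩
  rw [Measure.dirac_apply' x hA] at hr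
  have hxA : x ∈ A := mem_of_indicator_ne_zero hr.ne_bot
  exact ⟨{x}, singleton_subset_iff.2 hxA, isCompact_singleton, by simpa [hxA] using hr⟩

namespace MemP1

theorem isTightMeasureSet (hμ : MemP1 μ) : IsTightMeasureSet {μ} :=
  have := hμ.1
  have : μ.InnerRegular := ⟨hμ.2.2.1⟩
  isTightMeasureSet_singleton_of_innerRegular

theorem integrable_dist (hμ : MemP1 μ) (y : X) : Integrable (fun x => dist x y) μ := by
  obtain ⟨_, -, -, x₀, hx₀⟩ := hμ
  have hdist : Integrable (fun x => dist x x₀) μ :=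
    ⟨(continuous_id.dist continuous_const).aestronglyMeasurable, hx₀⟩
  refine (hdist.add (integrable_const (dist x₀ y))).mono'
    (continuous_id.dist continuous_const).aestronglyMeasurable (.of_forall fun x => ?_)
  simpa using dist_triangle x x₀ y

theorem integrable_of_lipschitzWith (hμ : MemP1 μ) {F : Type*} [NormedAddCommGroup F]
    {K : NNReal} {f : X → F} (hf : LipschitzWith K f) : Integrable f μ := by
  have hfm : AEStronglyMeasurable f μ :=
    aestronglyMeasurable_of_continuous_of_isTightMeasureSet hμ.isTightMeasureSet hf.continuous
  have := hμ.1
  obtain ⟨y, -⟩ := hμ.2.2.2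
  refine (((hμ.integrable_dist y).const_mul K).add (integrable_const ‖f y‖)).mono' hfm
    (.of_forall fun x => ?_)
  calc ‖f x‖ ≤ ‖f x - f y‖ + ‖f y‖ := norm_le_norm_sub_add _ _
    _ ≤ K * dist x y + ‖f y‖ := by grw [← dist_eq_norm, hf.dist_le_mul]

theorem integral_sub_le_integral_dist (hμ : MemP1 μ) {f : X → ℝ}
    (hf : LipschitzWith 1 f) (y : X) : ∫ x, f x ∂μ - f y ≤ ∫ x, dist x y ∂μ := by
  have := hμ.1
  have hfμ : Integrable f μ := hμ.integrable_of_lipschitzWith hf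
  calc ∫ x, f x ∂μ - f y = ∫ x, (f x - f y) ∂μ := by
        rw [integral_sub hfμ (integrable_const _), integral_const, probReal_univ, one_smul]
    _ ≤ ∫ x, dist x y ∂μ :=
      integral_mono (hfμ.sub (integrable_const _)) (hμ.integrable_dist y) fun x => by
        simpa using (le_abs_self _).trans (hf.dist_le_mul x y)

theorem W1_dirac_le_integral_dist (hμ : MemP1 μ) (y : X) :
    W1 μ (Measure.dirac y) ≤ ∫ x, dist x y ∂μ := by
  refine csSup_le ⟨_, fun _ => 0, .const' 0, rfl⟩ ?_
  rintro _ ⟨f, hf, rfl⟩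
  rw [integral_dirac]
  exact hμ.integral_sub_le_integral_dist hf y

theorem integral_sub_integral_le_W1 (hμ : MemP1 μ) (hν : MemP1 ν) {f : X → ℝ}
    (hf : LipschitzWith 1 f) : ∫ x, f x ∂μ - ∫ x, f x ∂ν ≤ W1 μ ν := by
  obtain ⟨y, -⟩ := hμ.2.2.2
  refine le_csSup ⟨∫ x, dist x y ∂μ + ∫ x, dist x y ∂ν, ?_⟩ ⟨f, hf, rfl⟩
  rintro _ ⟨g, hg, rfl⟩
  have hgμ := hμ.integral_sub_le_integral_dist hg y
  have hgν := hν.integral_sub_le_integral_dist hg.neg y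
  simp only [Pi.neg_apply, integral_neg] at hgν
  linarith

end MemP1

theorem IsContractingBarycenter.dist_le_integral_dist {β : Measure X → X}
    (hβ : IsContractingBarycenter β) (hμ : MemP1 μ) (y : X) :
    dist (β μ) y ≤ ∫ x, dist x y ∂μ :=
  calc dist (β μ) y = dist (β μ) (β (Measure.dirac y)) := by rw [hβ.1]
    _ ≤ W1 μ (Measure.dirac y) := hβ.2 _ _ hμ (memP1_dirac y)
    _ ≤ ∫ x, dist x y ∂μ := hμ.W1_dirac_le_integral_dist y

end WassersteinSpace

theorem MemP1.integrable_id {E : Type*} [NormedAddCommGroup E] [MeasurableSpace E]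
    [OpensMeasurableSpace E] {μ : Measure E} (hμ : MemP1 μ) : Integrable (fun x => x) μ :=
  hμ.integrable_of_lipschitzWith .id

section Barycenter

variable {E : Type*} [NormedAddCommGroup E] [NormedSpace ℝ E] [CompleteSpace E]
  [MeasurableSpace E] [OpensMeasurableSpace E]

theorem isContractingBarycenter_integral :
    IsContractingBarycenter (fun μ : Measure E => ∫ x, x ∂μ) := by
  refine ⟨fun x => integral_dirac _ x, fun μ ν hμ hν => ?_⟩
  obtain ⟨φ, hφ, hφnorm⟩ := exists_dual_vector'' ℝ (∫ x, x ∂μ - ∫ x, x ∂ν)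
  have hφlip : LipschitzWith 1 φ := φ.lipschitz.weaken hφ
  calc dist (∫ x, x ∂μ) (∫ x, x ∂ν) = φ (∫ x, x ∂μ) - φ (∫ x, x ∂ν) := by
        rw [dist_eq_norm, ← map_sub, hφnorm, RCLike.ofReal_real_eq_id, id]
    _ = ∫ x, φ x ∂μ - ∫ x, φ x ∂ν := by
        rw [φ.integral_comp_comm hμ.integrable_id, φ.integral_comp_comm hν.integrable_id]
    _ ≤ W1 μ ν := hμ.integral_sub_integral_le_W1 hν hφlip

theorem IsContractingBarycenter.eq_integral {β : Measure E → E} (hβ : IsContractingBarycenter β)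
    {μ : Measure E} (hμ : MemP1 μ) : β μ = ∫ x, x ∂μ := by
  have := hμ.1
  refine eq_integral_of_forall_norm_sub_le hμ.integrable_id fun x => ?_
  simpa only [dist_eq_norm] using hβ.dist_le_integral_dist hμ x

end Barycenter

theorem banach_barycenter_is_integral_and_unique
    {E : Type*} [NormedAddCommGroup E] [NormedSpace ℝ E] [CompleteSpace E]
    [MeasurableSpace E] [BorelSpace E] :
    IsContractingBarycenter (fun μ : Measure E => ∫ x, x ∂μ) ∧
    ∀ β : Measure E → E, IsContractingBarycenter β →
      ∀ μ : Measure E, MemP1 μ → β μ = ∫ x, x ∂μ :=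
  ⟨isContractingBarycenter_integral, fun _ hβ _ hμ => hβ.eq_integral hμ⟩
end

section
/- Let Σ be a countable semigroup with a Følner sequence (Σ_k)_{k≥1}, and let Θ : ℓ∞(Σ) → ℝ be a linear functional. Then the following are equivalent: (1) Θ is positive and a generalized limit; (2) Θ(x) ≤ liminf_{k→∞} ( sup_{s∈Σ} (1/|Σ_k|) Σ_{h∈Σ_k} x_{hs} ) for all x ∈ ℓ∞(Σ); (3) Θ(x) ≤ limsup_{k→∞} ( sup_{s∈Σ} (1/|Σ_k|) Σ_{h∈Σ_k} x_{hs} ) for all x ∈ ℓ∞(Σ). -/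
open Filter BoundedContinuousFunction

/-- `(F k)` is a Følner sequence of the semigroup `S`. -/
def IsFolner {S : Type*} [Semigroup S] [DecidableEq S] (F : ℕ → Finset S) : Prop :=
  (∀ k, (F k).Nonempty) ∧
  ∀ s : S, Tendsto
    (fun k => ((symmDiff ((F k).image (fun h => s * h)) (F k)).card : ℝ) / (F k).card)
    atTop (nhds 0)

/-- The average `(1/|F|) Σ_{h∈F} x_{h s}`. -/
noncomputable def folnerAvg {S : Type*} [Semigroup S] [TopologicalSpace S]
    (F : Finset S) (x : BoundedContinuousFunction S ℝ) (s : S) : ℝ :=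
  (∑ h ∈ F, x (h * s)) / F.card

/-- A generalized limit on `ℓ∞(S)`: a positive, normalized, left translation invariant
linear functional. -/
def IsGenLimit {S : Type*} [Semigroup S] [TopologicalSpace S] [DiscreteTopology S]
    (Θ : BoundedContinuousFunction S ℝ →ₗ[ℝ] ℝ) : Prop :=
  (∀ x : BoundedContinuousFunction S ℝ, (∀ s, 0 ≤ x s) → 0 ≤ Θ x) ∧
  (Θ (BoundedContinuousFunction.const S (1:ℝ)) = 1) ∧
  ∀ (s₀ : S) (x : BoundedContinuousFunction S ℝ),
    Θ (x.compContinuous ⟨fun s => s₀ * s, continuous_of_discreteTopology⟩) = Θ x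

/-!
A functional `Θ` is positive and normalized exactly when `x ≤ c` implies `Θ x ≤ c`. If `Θ` is
moreover left invariant, it takes the same value at `x` and at the average
`s ↦ (1/|A|) ∑ h ∈ A, x (h s)`, so `Θ x` is at most the supremum of that average, for every single
nonempty finite `A`. Conversely, let `p x` be the limsup of these suprema over a Følner sequence and
suppose `Θ ≤ p`. Then `p x ≤ c` when `x ≤ c`, and `p (x (s₀ ·) - x) ≤ 0`, since the averages of
`x (s₀ ·) - x` over `A` are at most `2 ‖x‖ |s₀ A ∆ A| / |A|`; applied to `x` and `-x`, this forces
invariance.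
-/

section SumImage

variable {α : Type*} [DecidableEq α]

lemma sum_le_sum_comp_add_card_sdiff_image_nsmul {M : Type*} [AddCommMonoid M] [PartialOrder M]
    [IsOrderedAddMonoid M] (A : Finset α) (g : α → α) {u : α → M} {c : M}
    (hu_nonneg : ∀ a, 0 ≤ u a) (hu_le : ∀ a, u a ≤ c) :
    ∑ a ∈ A, u a ≤ ∑ a ∈ A, u (g a) + (A \ A.image g).card • c :=
  calc ∑ a ∈ A, u a
      ≤ ∑ a ∈ A ∪ A.image g, u a :=
        Finset.sum_le_sum_of_subset_of_nonneg Finset.subset_union_left fun a _ _ => hu_nonneg a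
    _ = ∑ a ∈ A.image g, u a + ∑ a ∈ A \ A.image g, u a := by
        rw [← Finset.sdiff_union_self_eq_union, Finset.sum_union Finset.sdiff_disjoint, add_comm]
    _ ≤ ∑ a ∈ A, u (g a) + (A \ A.image g).card • c :=
        add_le_add (Finset.sum_image_le_of_nonneg fun a _ => hu_nonneg a)
          (Finset.sum_le_card_nsmul _ _ _ fun a _ => hu_le a)

lemma sum_comp_sub_sum_le_card_symmDiff_image (A : Finset α) (g : α → α) {f : α → ℝ} {C : ℝ}
    (hf : ∀ a, |f a| ≤ C) :
    ∑ a ∈ A, f (g a) - ∑ a ∈ A, f a ≤ 2 * C * (symmDiff (A.image g) A).card := by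
  rcases A.eq_empty_or_nonempty with rfl | ⟨a₀, -⟩
  · simp
  have hC : 0 ≤ C := (abs_nonneg _).trans (hf a₀)
  -- `g` need not be injective on `A`: for the nonnegative `C - f`, points with the same image can
  -- only increase the sum over `A` relative to the sum over `A.image g`.
  have hsum : ∑ a ∈ A, (C - f a) ≤ ∑ a ∈ A, (C - f (g a)) + (A \ A.image g).card • (2 * C) :=
    sum_le_sum_comp_add_card_sdiff_image_nsmul A g (fun a => by linarith [(abs_le.1 (hf a)).2])
      fun a => by linarith [(abs_le.1 (hf a)).1]
  have hcard : ((A \ A.image g).card : ℝ) ≤ (symmDiff (A.image g) A).card :=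
    mod_cast Finset.card_le_card (le_sup_right (a := A.image g \ A))
  calc ∑ a ∈ A, f (g a) - ∑ a ∈ A, f a
      ≤ 2 * C * (A \ A.image g).card := by
        simp only [Finset.sum_sub_distrib, nsmul_eq_mul] at hsum
        linarith
    _ ≤ 2 * C * (symmDiff (A.image g) A).card := by gcongr

end SumImage

lemma nonneg_and_map_const_one_iff_forall_le {X : Type*} [TopologicalSpace X]
    (Θ : (X →ᵇ ℝ) →ₗ[ℝ] ℝ) :
    ((∀ x : X →ᵇ ℝ, (∀ p, 0 ≤ x p) → 0 ≤ Θ x) ∧ Θ (const X 1) = 1) ↔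
      ∀ (x : X →ᵇ ℝ) (c : ℝ), (∀ p, x p ≤ c) → Θ x ≤ c := by
  constructor
  · rintro ⟨hpos, hone⟩ x c hx
    have hdiff : 0 ≤ Θ (c • const X 1 - x) := hpos _ fun p => by simpa using hx p
    simpa [hone] using hdiff
  · intro hle
    refine ⟨fun x hx => ?_, le_antisymm (hle _ 1 fun _ => le_rfl) ?_⟩
    · simpa using hle (-x) 0 fun p => by simpa using hx p
    · simpa using hle (-const X 1) (-1) fun _ => le_rfl

section FolnerAvg

variable {S : Type*} [Semigroup S] [TopologicalSpace S]

lemma abs_folnerAvg_le_norm (A : Finset S) (x : S →ᵇ ℝ) (s : S) : |folnerAvg A x s| ≤ ‖x‖ := by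
  rw [folnerAvg, abs_div, Nat.abs_cast]
  refine div_le_of_le_mul₀ (Nat.cast_nonneg _) (norm_nonneg x) ?_
  calc |∑ h ∈ A, x (h * s)|
      ≤ ∑ h ∈ A, |x (h * s)| := Finset.abs_sum_le_sum_abs _ _
    _ ≤ A.card • ‖x‖ := Finset.sum_le_card_nsmul _ _ _ fun h _ => x.norm_coe_le_norm _
    _ = ‖x‖ * A.card := by rw [nsmul_eq_mul, mul_comm]

lemma folnerAvg_le_of_forall_le {A : Finset S} (hA : A.Nonempty) {x : S →ᵇ ℝ} {c : ℝ}
    (hx : ∀ s, x s ≤ c) (s : S) : folnerAvg A x s ≤ c := by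
  rw [folnerAvg, div_le_iff₀ (mod_cast hA.card_pos), mul_comm, ← nsmul_eq_mul]
  exact Finset.sum_le_card_nsmul _ _ _ fun h _ => hx _

lemma bddAbove_range_folnerAvg (A : Finset S) (x : S →ᵇ ℝ) :
    BddAbove (Set.range (folnerAvg A x)) :=
  ⟨‖x‖, Set.forall_mem_range.2 fun s => (abs_le.1 (abs_folnerAvg_le_norm A x s)).2⟩

lemma abs_iSup_folnerAvg_le_norm (A : Finset S) (x : S →ᵇ ℝ) :
    |⨆ s, folnerAvg A x s| ≤ ‖x‖ := by
  cases isEmpty_or_nonempty S with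
  | inl hempty => simp
  | inr hnonempty =>
    have hbounds := fun s => abs_le.1 (abs_folnerAvg_le_norm A x s)
    exact abs_le.2 ⟨le_ciSup_of_le (bddAbove_range_folnerAvg A x) hnonempty.some (hbounds _).1,
      ciSup_le fun s => (hbounds s).2⟩

variable {ι : Type*} (l : Filter ι) (F : ι → Finset S) (x : S →ᵇ ℝ)

lemma isBoundedUnder_abs_iSup_folnerAvg :
    l.IsBoundedUnder (· ≤ ·) fun i => |⨆ s, folnerAvg (F i) x s| :=
  isBoundedUnder_of ⟨‖x‖, fun i => abs_iSup_folnerAvg_le_norm (F i) x⟩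

lemma isBoundedUnder_le_iSup_folnerAvg :
    l.IsBoundedUnder (· ≤ ·) fun i => ⨆ s, folnerAvg (F i) x s :=
  (isBoundedUnder_le_abs.1 (isBoundedUnder_abs_iSup_folnerAvg l F x)).1

lemma isBoundedUnder_ge_iSup_folnerAvg :
    l.IsBoundedUnder (· ≥ ·) fun i => ⨆ s, folnerAvg (F i) x s :=
  (isBoundedUnder_le_abs.1 (isBoundedUnder_abs_iSup_folnerAvg l F x)).2

variable {l F x}

lemma limsup_iSup_folnerAvg_le_of_tendsto [Nonempty S] [l.NeBot] {c : ι → ℝ} {L : ℝ}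
    (hc : Tendsto c l (nhds L)) (h : ∀ i s, folnerAvg (F i) x s ≤ c i) :
    limsup (fun i => ⨆ s, folnerAvg (F i) x s) l ≤ L :=
  calc limsup (fun i => ⨆ s, folnerAvg (F i) x s) l
      ≤ limsup c l := limsup_le_limsup (Eventually.of_forall fun i => ciSup_le (h i))
        (isBoundedUnder_ge_iSup_folnerAvg l F x).isCoboundedUnder_le hc.isBoundedUnder_le
    _ = L := hc.limsup_eq

end FolnerAvg

/-- `F` is a Følner family of the semigroup `S` along the filter `l`: the analogue of `IsFolner`
for an arbitrary index type, so that `l = atTop` on a directed order gives Følner nets. -/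
def IsFolnerAlong {S : Type*} [Semigroup S] [DecidableEq S] {ι : Type*} (l : Filter ι)
    (F : ι → Finset S) : Prop :=
  (∀ i, (F i).Nonempty) ∧
  ∀ s : S, Tendsto
    (fun i => ((symmDiff ((F i).image (fun h => s * h)) (F i)).card : ℝ) / (F i).card)
    l (nhds 0)

section GenLimit

variable {S : Type*} [Semigroup S] [TopologicalSpace S] [DiscreteTopology S]

/-- Left translation `x ↦ (s ↦ x (s₀ * s))` on `ℓ∞(S)`, bundled as a continuous linear map; on
elements it unfolds to the `compContinuous` term of `IsGenLimit`. -/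
noncomputable def leftTranslate (s₀ : S) : (S →ᵇ ℝ) →L[ℝ] (S →ᵇ ℝ) :=
  compContinuousCLM ℝ ℝ ⟨fun s => s₀ * s, continuous_of_discreteTopology⟩

lemma leftTranslate_apply (s₀ : S) (x : S →ᵇ ℝ) (s : S) : leftTranslate s₀ x s = x (s₀ * s) :=
  rfl

lemma inv_card_smul_sum_leftTranslate_apply (A : Finset S) (x : S →ᵇ ℝ) (s : S) :
    ((A.card : ℝ)⁻¹ • ∑ h ∈ A, leftTranslate h x) s = folnerAvg A x s := by
  simp [folnerAvg, leftTranslate_apply, div_eq_inv_mul]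

lemma folnerAvg_leftTranslate_sub_le [DecidableEq S] (A : Finset S) (s₀ : S) (x : S →ᵇ ℝ)
    (s : S) :
    folnerAvg A (leftTranslate s₀ x - x) s ≤
      2 * ‖x‖ * ((symmDiff (A.image (s₀ * ·)) A).card / A.card) := by
  have hsum : ∑ h ∈ A, (leftTranslate s₀ x - x) (h * s) ≤
      2 * ‖x‖ * (symmDiff (A.image (s₀ * ·)) A).card := by
    simpa only [BoundedContinuousFunction.sub_apply, leftTranslate_apply,
      Finset.sum_sub_distrib, mul_assoc] using
      sum_comp_sub_sum_le_card_symmDiff_image A (s₀ * ·) (f := fun h => x (h * s))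
        fun h => x.norm_coe_le_norm _
  rw [folnerAvg, ← mul_div_assoc]
  gcongr

variable {Θ : (S →ᵇ ℝ) →ₗ[ℝ] ℝ}

lemma isGenLimit_iff_forall_le_and_leftTranslate :
    IsGenLimit Θ ↔ (∀ (x : S →ᵇ ℝ) (c : ℝ), (∀ s, x s ≤ c) → Θ x ≤ c) ∧
      ∀ (s₀ : S) (x : S →ᵇ ℝ), Θ (leftTranslate s₀ x) = Θ x := by
  rw [← nonneg_and_map_const_one_iff_forall_le, and_assoc]
  rfl

lemma IsGenLimit.le_iSup_folnerAvg (hΘ : IsGenLimit Θ) {A : Finset S} (hA : A.Nonempty)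
    (x : S →ᵇ ℝ) : Θ x ≤ ⨆ s, folnerAvg A x s := by
  obtain ⟨hle, hinv⟩ := isGenLimit_iff_forall_le_and_leftTranslate.1 hΘ
  have hcard : (A.card : ℝ) ≠ 0 := mod_cast hA.card_ne_zero
  calc Θ x
      = Θ ((A.card : ℝ)⁻¹ • ∑ h ∈ A, leftTranslate h x) := by
        simp [hinv, inv_mul_cancel_left₀ hcard]
    _ ≤ ⨆ s, folnerAvg A x s := hle _ _ fun s => by
        rw [inv_card_smul_sum_leftTranslate_apply]
        exact le_ciSup (bddAbove_range_folnerAvg A x) s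

variable [DecidableEq S] {ι : Type*} {l : Filter ι} {F : ι → Finset S}

lemma IsFolnerAlong.isGenLimit_of_forall_le_limsup [l.NeBot] (hF : IsFolnerAlong l F)
    (hΘ : ∀ x, Θ x ≤ limsup (fun i => ⨆ s, folnerAvg (F i) x s) l) : IsGenLimit Θ := by
  obtain ⟨hne, hfolner⟩ := hF
  have : Nonempty S := let ⟨i⟩ := l.nonempty_of_neBot; (hne i).to_type
  have hsub : ∀ (s₀ : S) (x : S →ᵇ ℝ), Θ (leftTranslate s₀ x) ≤ Θ x := fun s₀ x => by
    have hbound : Tendsto (fun i => 2 * ‖x‖ *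
        ((symmDiff ((F i).image (s₀ * ·)) (F i)).card / (F i).card)) l (nhds 0) := by
      simpa using (hfolner s₀).const_mul (2 * ‖x‖)
    have hdiff : Θ (leftTranslate s₀ x - x) ≤ 0 :=
      (hΘ _).trans (limsup_iSup_folnerAvg_le_of_tendsto hbound fun i =>
        folnerAvg_leftTranslate_sub_le (F i) s₀ x)
    simpa using hdiff
  refine isGenLimit_iff_forall_le_and_leftTranslate.2 ⟨fun x c hx => ?_, fun s₀ x => ?_⟩
  · exact (hΘ x).trans (limsup_iSup_folnerAvg_le_of_tendsto tendsto_const_nhds fun i =>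
      folnerAvg_le_of_forall_le (hne i) hx)
  · exact le_antisymm (hsub s₀ x) (by simpa using hsub s₀ (-x))

theorem generalized_limit_characterization_general [l.NeBot] (hF : IsFolnerAlong l F)
    (Θ : (S →ᵇ ℝ) →ₗ[ℝ] ℝ) :
    [IsGenLimit Θ,
      ∀ x, Θ x ≤ liminf (fun i => ⨆ s, folnerAvg (F i) x s) l,
      ∀ x, Θ x ≤ limsup (fun i => ⨆ s, folnerAvg (F i) x s) l].TFAE := by
  tfae_have 1 → 2 := fun hΘ x =>
    le_liminf_of_le (isBoundedUnder_le_iSup_folnerAvg l F x).isCoboundedUnder_ge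
      (Eventually.of_forall fun i => hΘ.le_iSup_folnerAvg (hF.1 i) x)
  tfae_have 2 → 3 := fun hΘ x => (hΘ x).trans
    (liminf_le_limsup (isBoundedUnder_le_iSup_folnerAvg l F x)
      (isBoundedUnder_ge_iSup_folnerAvg l F x))
  tfae_have 3 → 1 := hF.isGenLimit_of_forall_le_limsup
  tfae_finish

end GenLimit

theorem generalized_limit_characterization
    {S : Type*} [Semigroup S] [Countable S] [DecidableEq S]
    [TopologicalSpace S] [DiscreteTopology S]
    (F : ℕ → Finset S) (hF : IsFolner F)
    (Θ : BoundedContinuousFunction S ℝ →ₗ[ℝ] ℝ) :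
    (IsGenLimit Θ ↔
      ∀ x : BoundedContinuousFunction S ℝ,
        Θ x ≤ liminf (fun k => ⨆ s : S, folnerAvg (F k) x s) atTop) ∧
    ((∀ x : BoundedContinuousFunction S ℝ,
        Θ x ≤ liminf (fun k => ⨆ s : S, folnerAvg (F k) x s) atTop) ↔
      (∀ x : BoundedContinuousFunction S ℝ,
        Θ x ≤ limsup (fun k => ⨆ s : S, folnerAvg (F k) x s) atTop)) :=
  have htfae := generalized_limit_characterization_general (l := atTop) hF Θ
  ⟨htfae.out 0 1, htfae.out 1 2⟩
end

section
/- Let 𝔛 be a Hausdorff topological space and let Σ be a countable subsemigroup of the semigroup of continuous self-maps of 𝔛 (under composition) that admits a Følner sequence (Σ_k)_{k≥1}. If there is a point x₀ ∈ 𝔛 and a compact subset K₀ ⊆ 𝔛 such that limsup_{k→∞} ( sup_{s∈Σ} (1/|Σ_k|) Σ_{h∈Σ_k} 1_{K₀}(h(s(x₀))) ) > 0, then there exists a Radon probability measure μ on the Borel σ-algebra of 𝔛 such that s_*μ = μ for every s ∈ Σ and μ(K₀) > 0. -/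
open MeasureTheory Filter

open Set TopologicalSpace
open scoped NNReal ENNReal Topology symmDiff Finset

/-!
Record the visits of the points `s x₀` under the Følner sets as empirical distributions. Along an
ultrafilter on which the frequency of visits to `K₀` stays bounded away from zero, these converge
setwise to a finitely additive measure `m` with `m K₀ > 0`, and the Følner condition makes `m`
invariant. Replacing `m K` by the infimum of `m` over the open neighbourhoods of the compact set `K`
gives a content, whose associated Borel measure is Radon even without local compactness. Mass may
be lost in this step, so `s_*μ = μ` is not immediate; but `s_*μ ≤ μ` survives, and both sides
have the same finite total mass. The mass of `K₀` does not decrease, so `μ` can be normalized.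
-/

lemma isSetRing_measurableSet {X : Type*} [MeasurableSpace X] :
    IsSetRing {A : Set X | MeasurableSet A} where
  empty_mem := MeasurableSet.empty
  union_mem _ _ hA hB := MeasurableSet.union hA hB
  sdiff_mem _ _ hA hB := MeasurableSet.diff hA hB

lemma exists_addContent_tendsto_ultrafilter {X G ι : Type*} [AddCommMonoid G] [TopologicalSpace G]
    [T2Space G] [ContinuousAdd G] {C : Set (Set X)} (hC : IsSetRing C) {Q : Set G}
    (hQ : IsCompact Q) {m : ι → AddContent G C} (hm : ∀ i, ∀ A ∈ C, m i A ∈ Q)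
    (𝒰 : Ultrafilter ι) :
    ∃ m' : AddContent G C, ∀ A ∈ C, Tendsto (fun i => m i A) 𝒰 (𝓝 (m' A)) := by
  have exists_limit (A : Set X) : ∃ a, A ∈ C → Tendsto (fun i => m i A) 𝒰 (𝓝 a) := by
    by_cases hA : A ∈ C
    · obtain ⟨a, -, ha⟩ :=
        hQ.ultrafilter_le_nhds' (𝒰.map fun i => m i A) (univ_mem' (f := 𝒰) fun i => hm i A hA)
      exact ⟨a, fun _ => ha⟩
    · exact ⟨0, fun hA' => absurd hA' hA⟩
  choose limit tendsto_limit using exists_limit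
  refine ⟨hC.addContent_of_union limit ?_ fun {A B} hA hB hAB => ?_, tendsto_limit⟩
  · exact tendsto_nhds_unique (tendsto_limit ∅ hC.empty_mem) (by simp)
  · refine tendsto_nhds_unique (tendsto_limit _ (hC.union_mem hA hB)) ?_
    simpa only [addContent_union hC hA hB hAB] using (tendsto_limit A hA).add (tendsto_limit B hB)

/-- Finite, finitely additive measures on the measurable subsets of `X`. The value on a
non-measurable set carries no information. -/
abbrev FinitelyAdditiveMeasure (X : Type*) [MeasurableSpace X] : Type _ :=
  AddContent ℝ≥0 {A : Set X | MeasurableSet A}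

namespace FinitelyAdditiveMeasure

section OuterRegularization

variable {X : Type*} [TopologicalSpace X] [MeasurableSpace X] (m : FinitelyAdditiveMeasure X)
  {A B U : Set X}

instance nonempty_opens_superset (A : Set X) : Nonempty {U : Opens X // A ⊆ U} :=
  ⟨⊤, subset_univ A⟩

/-- The outer regularization of `m`: the infimum of `m` over the open supersets of a set. -/
noncomputable def outerRegularization (A : Set X) : ℝ≥0 :=
  ⨅ U : {U : Opens X // A ⊆ U}, m U.1

lemma outerRegularization_le (hU : IsOpen U) (hAU : A ⊆ U) : m.outerRegularization A ≤ m U :=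
  ciInf_le' (fun U : {U : Opens X // A ⊆ U} => m U.1) ⟨⟨U, hU⟩, hAU⟩

lemma le_outerRegularization {c : ℝ≥0} (h : ∀ U, IsOpen U → A ⊆ U → c ≤ m U) :
    c ≤ m.outerRegularization A :=
  le_ciInf fun U => h U.1 U.1.isOpen U.2

lemma outerRegularization_mono (hAB : A ⊆ B) :
    m.outerRegularization A ≤ m.outerRegularization B :=
  m.le_outerRegularization fun _U hU hBU => m.outerRegularization_le hU (hAB.trans hBU)

variable [OpensMeasurableSpace X]

lemma le_outerRegularization_self (hA : MeasurableSet A) : m A ≤ m.outerRegularization A :=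
  m.le_outerRegularization fun _U hU hAU =>
    addContent_mono isSetRing_measurableSet.isSetSemiring hA hU.measurableSet hAU

lemma outerRegularization_union_le :
    m.outerRegularization (A ∪ B) ≤ m.outerRegularization A + m.outerRegularization B :=
  NNReal.le_iInf_add_iInf fun ⟨U, hAU⟩ ⟨V, hBV⟩ =>
    (m.outerRegularization_le (U.isOpen.union V.isOpen) (union_subset_union hAU hBV)).trans
      (addContent_union_le isSetRing_measurableSet U.isOpen.measurableSet V.isOpen.measurableSet)

lemma outerRegularization_union (hAB : SeparatedNhds A B) :
    m.outerRegularization (A ∪ B) = m.outerRegularization A + m.outerRegularization B := by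
  refine le_antisymm m.outerRegularization_union_le (m.le_outerRegularization fun U hU hABU => ?_)
  obtain ⟨V, W, hV, hW, hAV, hBW, hVW⟩ := hAB
  obtain ⟨hAU, hBU⟩ := union_subset_iff.1 hABU
  have hUV := hU.inter hV
  have hUW := hU.inter hW
  calc m.outerRegularization A + m.outerRegularization B
    _ ≤ m (U ∩ V) + m (U ∩ W) := add_le_add
        (m.outerRegularization_le hUV (subset_inter hAU hAV))
        (m.outerRegularization_le hUW (subset_inter hBU hBW))
    _ = m (U ∩ V ∪ U ∩ W) :=
        (addContent_union isSetRing_measurableSet hUV.measurableSet hUW.measurableSet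
          (hVW.mono inter_subset_right inter_subset_right)).symm
    _ ≤ m U := addContent_mono isSetRing_measurableSet.isSetSemiring
        (hUV.union hUW).measurableSet hU.measurableSet
        (union_subset inter_subset_left inter_subset_left)

/-- The content on compact sets obtained by restricting the outer regularization of `m`. -/
noncomputable def outerContent [R1Space X] : Content X where
  toFun K := m.outerRegularization K
  mono' _K _L hKL := m.outerRegularization_mono hKL
  sup_disjoint' K L hKL _ hL := m.outerRegularization_union
    (SeparatedNhds.of_isCompact_isCompact_isClosed K.isCompact L.isCompact hL hKL)
  sup_le' _K _L := m.outerRegularization_union_le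

end OuterRegularization

section RadonMeasure

variable {X Y : Type*} [TopologicalSpace X] [MeasurableSpace X] [BorelSpace X]
  [TopologicalSpace Y] [MeasurableSpace Y] [BorelSpace Y]

/-- The Borel measure generated by the outer content of `m`. It agrees with the outer regularization
of `m` on compact sets, but its total mass may be smaller than that of `m`. -/
noncomputable def radonMeasure [R1Space X] (m : FinitelyAdditiveMeasure X) : Measure X :=
  m.outerContent.measure

lemma radonMeasure_eq_iSup [R1Space X] (m : FinitelyAdditiveMeasure X) {U : Set X}
    (hU : IsOpen U) :
    m.radonMeasure U =
      ⨆ (K : Compacts X) (_ : (K : Set X) ⊆ U), (m.outerRegularization K : ℝ≥0∞) := by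
  rw [radonMeasure, Content.measure_apply _ hU.measurableSet, Content.outerMeasure_of_isOpen _ U hU]
  rfl

lemma radonMeasure_le_of_isOpen [R1Space X] (m : FinitelyAdditiveMeasure X) {U : Set X}
    (hU : IsOpen U) : m.radonMeasure U ≤ m U := by
  rw [m.radonMeasure_eq_iSup hU]
  exact iSup₂_le fun K hKU => ENNReal.coe_le_coe.2 (m.outerRegularization_le hU hKU)

instance isFiniteMeasure_radonMeasure [R1Space X] (m : FinitelyAdditiveMeasure X) :
    IsFiniteMeasure m.radonMeasure :=
  ⟨(m.radonMeasure_le_of_isOpen isOpen_univ).trans_lt ENNReal.coe_lt_top⟩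

variable [T2Space X] [T2Space Y] (m : FinitelyAdditiveMeasure X) {K : Set X}

lemma radonMeasure_of_isCompact (hK : IsCompact K) :
    m.radonMeasure K = m.outerRegularization K := by
  apply le_antisymm
  · rw [outerRegularization, ENNReal.coe_iInf]
    exact le_iInf fun U => (measure_mono U.2).trans (m.radonMeasure_le_of_isOpen U.1.isOpen)
  · rw [radonMeasure, Content.measure_apply _ hK.measurableSet]
    exact m.outerContent.le_outerMeasure_compacts ⟨K, hK⟩

lemma le_radonMeasure_of_isCompact (hK : IsCompact K) : m K ≤ m.radonMeasure K := by
  rw [m.radonMeasure_of_isCompact hK]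
  exact ENNReal.coe_le_coe.2 (m.le_outerRegularization_self hK.measurableSet)

instance regular_radonMeasure : m.radonMeasure.Regular where
  toOuterRegular := m.outerContent.outerRegular
  innerRegular U hU r hr := by
    simp only [m.radonMeasure_eq_iSup hU, lt_iSup_iff] at hr
    obtain ⟨K, hKU, hrK⟩ := hr
    exact ⟨K, hKU, K.isCompact, by rwa [m.radonMeasure_of_isCompact K.isCompact]⟩

variable {m}

lemma map_radonMeasure_le {m' : FinitelyAdditiveMeasure Y} {f : X → Y} (hf : Continuous f)
    (hmm' : ∀ U, IsOpen U → m (f ⁻¹' U) ≤ m' U) :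
    m.radonMeasure.map f ≤ m'.radonMeasure := by
  have on_compact (K : Set X) (hK : IsCompact K) :
      m.radonMeasure K ≤ m'.radonMeasure (f '' K) := by
    rw [m.radonMeasure_of_isCompact hK, m'.radonMeasure_of_isCompact (hK.image hf)]
    refine ENNReal.coe_le_coe.2 (m'.le_outerRegularization fun U hU hKU => ?_)
    exact (m.outerRegularization_le (hU.preimage hf) (image_subset_iff.1 hKU)).trans (hmm' U hU)
  refine Measure.le_iff.2 fun A hA => ?_
  rw [Measure.map_apply hf.measurable hA, (hf.measurable hA).measure_eq_iSup_isCompact]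
  exact iSup₂_le fun K hKA => iSup_le fun hK =>
    (on_compact K hK).trans (measure_mono (image_subset_iff.2 hKA))

lemma map_radonMeasure_eq {s : X → X} (hs : Continuous s)
    (hms : ∀ U, IsOpen U → m (s ⁻¹' U) ≤ m U) :
    m.radonMeasure.map s = m.radonMeasure :=
  Measure.eq_of_le_of_measure_univ_eq (map_radonMeasure_le hs hms)
    (by rw [Measure.map_apply hs.measurable .univ, preimage_univ])

theorem exists_invariant_radon_probability {S : Set (X → X)} (hS : ∀ s ∈ S, Continuous s)
    (hinv : ∀ s ∈ S, ∀ U, IsOpen U → m (s ⁻¹' U) ≤ m U) (hK : IsCompact K) (hmK : 0 < m K) :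
    ∃ μ : Measure X, IsProbabilityMeasure μ ∧
      (∀ K : Set X, IsCompact K → μ K < ⊤) ∧
      μ.InnerRegularWRT IsCompact MeasurableSet ∧
      (∀ s ∈ S, Measure.map s μ = μ) ∧
      0 < μ K := by
  set ν := m.radonMeasure
  have hνK : 0 < ν K := (ENNReal.coe_pos.2 hmK).trans_le (m.le_radonMeasure_of_isCompact hK)
  have : NeZero ν := ⟨fun hν => by simp [hν] at hνK⟩
  refine ⟨(ν univ)⁻¹ • ν, inferInstance, fun K _ => measure_lt_top _ K,
    Measure.InnerRegular.innerRegular.smul _, fun s hs => ?_, ?_⟩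
  · rw [Measure.map_smul, map_radonMeasure_eq (hS s hs) (hinv s hs)]
  · exact ENNReal.mul_pos (ENNReal.inv_ne_zero.2 (measure_ne_top ν univ)) hνK.ne'

end RadonMeasure

end FinitelyAdditiveMeasure

lemma card_filter_comp_le {α : Type*} [DecidableEq α] (F : Finset α) (σ : α → α) (p : α → Prop)
    [DecidablePred p] : #{a ∈ F | p (σ a)} ≤ #{a ∈ F | p a} + #(F.image σ ∆ F) := by
  -- `σ` need not be injective on `F`, so only the complementary sets can be compared directly.
  have hnot : #{a ∈ F | ¬ p a} ≤ #{a ∈ F | ¬ p (σ a)} + #(F.image σ ∆ F) :=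
    calc #{a ∈ F | ¬ p a}
      _ ≤ #({a ∈ F.image σ | ¬ p a} ∪ F.image σ ∆ F) := by
          refine Finset.card_le_card fun a ha => ?_
          simp only [Finset.mem_filter, Finset.mem_union, Finset.mem_symmDiff] at ha ⊢
          tauto
      _ ≤ #{a ∈ F.image σ | ¬ p a} + #(F.image σ ∆ F) := Finset.card_union_le _ _
      _ ≤ #{a ∈ F | ¬ p (σ a)} + #(F.image σ ∆ F) := by
          rw [Finset.filter_image]
          exact Nat.add_le_add_right Finset.card_image_le _
  have hσ := F.card_filter_add_card_filter_not fun a => p (σ a)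
  have hp := F.card_filter_add_card_filter_not p
  lia

section Empirical

variable {α X : Type*} [MeasurableSpace X]

open Classical in
/-- The empirical distribution of the family `(φ a)` indexed by `a ∈ F`, that is the proportion of
indices with `φ a ∈ A`. It is zero when `F` is empty. -/
noncomputable def empiricalMeasure (F : Finset α) (φ : α → X) : FinitelyAdditiveMeasure X :=
  isSetRing_measurableSet.addContent_of_union
    (fun A => #{a ∈ F | φ a ∈ A} / #F) (by simp) fun {A B} _ _ hAB => by
      have hdisj : Disjoint (F.filter (φ · ∈ A)) (F.filter (φ · ∈ B)) :=
        Finset.disjoint_filter.2 fun a _ hA hB => hAB.le_bot ⟨hA, hB⟩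
      simp only [mem_union, Finset.filter_or, Finset.card_union_of_disjoint hdisj, Nat.cast_add,
        add_div]

open Classical in
lemma empiricalMeasure_apply (F : Finset α) (φ : α → X) (A : Set X) :
    empiricalMeasure F φ A = #{a ∈ F | φ a ∈ A} / #F :=
  rfl

lemma coe_empiricalMeasure_apply (F : Finset α) (φ : α → X) (A : Set X) :
    (empiricalMeasure F φ A : ℝ) = (∑ a ∈ F, A.indicator (fun _ => (1 : ℝ)) (φ a)) / #F := by
  classical
  simp [empiricalMeasure_apply, indicator_apply]

lemma empiricalMeasure_le_one (F : Finset α) (φ : α → X) (A : Set X) :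
    empiricalMeasure F φ A ≤ 1 := by
  classical
  exact div_le_one_of_le₀ (by exact_mod_cast F.card_filter_le _) zero_le

lemma empiricalMeasure_preimage_le [DecidableEq α] (F : Finset α) {φ : α → X} {σ : α → α}
    {s : X → X} (hφ : Function.Semiconj φ σ s) (A : Set X) :
    empiricalMeasure F φ (s ⁻¹' A) ≤ empiricalMeasure F φ A + #(F.image σ ∆ F) / #F := by
  classical
  have hcard := card_filter_comp_le F σ fun a => φ a ∈ A
  simp only [empiricalMeasure_apply, mem_preimage, ← hφ.eq, ← add_div]
  gcongr
  exact_mod_cast hcard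

end Empirical

lemma exists_ultrafilter_le_of_frequently {ι : Type*} {l : Filter ι} {p : ι → Prop}
    (h : ∃ᶠ i in l, p i) : ∃ 𝒰 : Ultrafilter ι, ↑𝒰 ≤ l ∧ ∀ᶠ i in 𝒰, p i := by
  have := frequently_mem_iff_neBot.1 h
  obtain ⟨𝒰, h𝒰⟩ := exists_ultrafilter_iff.2 this
  exact ⟨𝒰, h𝒰.trans inf_le_left, le_principal_iff.1 (h𝒰.trans inf_le_right)⟩

theorem exists_invariant_radon_measure_general {X ι : Type*} [TopologicalSpace X] [T2Space X]
    [MeasurableSpace X] [BorelSpace X] [DecidableEq (X → X)] {S : Set (X → X)}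
    (hS : ∀ s ∈ S, Continuous s) {l : Filter ι} {F : ι → Finset (X → X)}
    (hF : ∀ s ∈ S, Tendsto
      (fun i => (#((F i).image (fun h => s ∘ h) ∆ F i) : ℝ) / #(F i)) l (𝓝 0))
    {K : Set X} (hK : IsCompact K) {c : ℝ} (hc : 0 < c)
    (hfreq : ∃ᶠ i in l, ∃ x,
      c < (∑ h ∈ F i, K.indicator (fun _ => (1 : ℝ)) (h x)) / #(F i)) :
    ∃ μ : Measure X, IsProbabilityMeasure μ ∧
      (∀ K : Set X, IsCompact K → μ K < ⊤) ∧
      μ.InnerRegularWRT IsCompact MeasurableSet ∧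
      (∀ s ∈ S, Measure.map s μ = μ) ∧
      0 < μ K := by
  obtain ⟨𝒰, h𝒰l, h𝒰⟩ := exists_ultrafilter_le_of_frequently hfreq
  obtain ⟨x, hx⟩ := h𝒰.choice
  obtain ⟨m, hm⟩ := exists_addContent_tendsto_ultrafilter isSetRing_measurableSet
    isCompact_Icc (m := fun i => empiricalMeasure (F i) fun h => h (x i))
    (fun i A _ => ⟨zero_le, empiricalMeasure_le_one _ _ A⟩) 𝒰
  refine FinitelyAdditiveMeasure.exists_invariant_radon_probability hS (m := m)
    (fun s hs U hU => ?_) hK ?_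
  · have hdefect : Tendsto
        (fun i => (#((F i).image (fun h => s ∘ h) ∆ F i) : ℝ≥0) / #(F i)) 𝒰 (𝓝 0) :=
      NNReal.tendsto_coe.1 (by simpa using (hF s hs).mono_left h𝒰l)
    have hlim := (hm U hU.measurableSet).add hdefect
    rw [add_zero] at hlim
    exact le_of_tendsto_of_tendsto' (hm _ ((hS s hs).measurable hU.measurableSet)) hlim fun i =>
      empiricalMeasure_preimage_le (F i) (φ := fun h => h (x i)) (fun _ => rfl) U
  · simp only [← coe_empiricalMeasure_apply] at hx
    have hlim := NNReal.tendsto_coe.2 (hm K hK.measurableSet)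
    exact NNReal.coe_pos.1 (hc.trans_le (ge_of_tendsto hlim (hx.mono fun _ => le_of_lt)))

lemma exists_frequently_lt_of_limsup_biSup_pos {ι β : Type*} {l : Filter ι} [l.NeBot] {S : Set β}
    {f : ι → β → ℝ} (hf : ∀ i b, 0 ≤ f i b) (hpos : 0 < l.limsup fun i => ⨆ b ∈ S, f i b) :
    ∃ c > 0, ∃ᶠ i in l, ∃ b ∈ S, c < f i b := by
  obtain ⟨c, hc, hcl⟩ := exists_between hpos
  have hcobdd : l.IsCoboundedUnder (· ≤ ·) fun i => ⨆ b ∈ S, f i b :=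
    isCoboundedUnder_le_of_le l fun i => Real.iSup_nonneg fun b => Real.iSup_nonneg fun _ => hf i b
  refine ⟨c, hc, (frequently_lt_of_lt_limsup hcobdd hcl).mono fun i hi => ?_⟩
  by_contra! hle
  exact hi.not_ge (Real.iSup_le (fun b => Real.iSup_le (hle b) hc.le) hc.le)

theorem exists_invariant_radon_measure
    {𝔛 : Type*} [TopologicalSpace 𝔛] [T2Space 𝔛] [MeasurableSpace 𝔛] [BorelSpace 𝔛]
    [DecidableEq (𝔛 → 𝔛)]
    (S : Set (𝔛 → 𝔛)) (hcount : S.Countable)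
    (hcont : ∀ f ∈ S, Continuous f)
    (hcomp : ∀ f ∈ S, ∀ g ∈ S, f ∘ g ∈ S)
    (F : ℕ → Finset (𝔛 → 𝔛)) (hFS : ∀ k, ↑(F k) ⊆ S) (hFne : ∀ k, (F k).Nonempty)
    (hFolner : ∀ s ∈ S, Tendsto
      (fun k => ((symmDiff ((F k).image (fun h => s ∘ h)) (F k)).card : ℝ) / (F k).card)
      atTop (nhds 0))
    (x₀ : 𝔛) (K₀ : Set 𝔛) (hK₀ : IsCompact K₀)
    (hpos : 0 < atTop.limsup (fun k : ℕ =>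
      ⨆ s ∈ S, (∑ h ∈ F k, K₀.indicator (fun _ => (1:ℝ)) (h (s x₀))) / (F k).card)) :
    ∃ μ : Measure 𝔛, IsProbabilityMeasure μ ∧
      (∀ K : Set 𝔛, IsCompact K → μ K < ⊤) ∧
      μ.InnerRegularWRT IsCompact MeasurableSet ∧
      (∀ s ∈ S, Measure.map s μ = μ) ∧
      0 < μ K₀ := by
  obtain ⟨c, hc, hfreq⟩ := exists_frequently_lt_of_limsup_biSup_pos
    (fun k s => by rw [← coe_empiricalMeasure_apply (F k) (· (s x₀))]; positivity) hpos
  exact exists_invariant_radon_measure_general hcont hFolner hK₀ hc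
    (hfreq.mono fun k ⟨s, _, hs⟩ => ⟨s x₀, hs⟩)
end
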